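/- arXiv:2509.26275 — 5 statements merged into one kernel-verified Lean document; each statement's English description precedes it below -/
import Mathlib

section
/- Let V be a Polish space, A a compact metric space, X = ℝ^m with a norm ‖·‖, and g : V → A × X a homeomorphism; write g(v) = (a_v, x_v) and define the causally fair cost d(v, v') = ‖x_v − x_{v'}‖. Fix p ∈ [1, ∞), δ > 0, a Borel probability measure P on V, and a bounded upper semicontinuous function ψ : V → ℝ. For λ ≥ 0 define ψ_λ(w) = sup_{Δ ∈ X} { ψ(g⁻¹(a_w, x_w + Δ)) − λ ‖Δ‖^p }. Then sup { ∫_V ψ dQ : Q a Borel probability measure on V with W_{d,p}(Q, P) ≤ δ } = inf_{λ ≥ 0} { λ δ^p + ∫_V sup_{a ∈ A} ψ_λ(g⁻¹(a, x_v)) dP(v) }. -/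
open MeasureTheory ENNReal

/-!
Put `c w v = ‖x_w - x_v‖ ^ p` and `t = δ ^ p`. The double supremum over `a` and `Δ` is the
envelope `φ_l v = ⨆ w, (ψ w - l * c w v)`, because `(a, Δ) ↦ g⁻¹ (a, x_v + Δ)` runs over all of `V`.

Consider the set `K ⊆ ℝ²` of pairs (budget `s`, reward `u`) such that some plan `π` on `V × V` with
second marginal `P` has cost at most `s` and reward `∫ ψ(w) dπ(w, v) = u` (`planSet`).

* Weak duality (`planSet_le_dual`): integrating `ψ w ≤ φ_l v + l * c w v` against a plan gives
  `u ≤ l * s + ∫ φ_l dP` on `K`.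
* Multiplier (`exists_multiplier`): `K` is convex and contains a point of budget `0 < t`. If `M` is
  the primal value, so that `u ≤ M` whenever `s ≤ t`, then a supporting line at `(t, M)` gives
  `l₀ ≥ 0` with `u - M ≤ l₀ * (s - t)` on all of `K`.
* Near-optimal plans (`exists_nearly_optimal`): for `l > 0`, `K` contains pairs with `u - l * s`
  arbitrarily close to `∫ φ_l dP`. No general measurable selection theorem is needed. A sequence
  that is dense for the topology induced by the graph of `ψ` already computes the supremum defining
  `φ_l v` for every `v`, so one may send `v` to the first nearly optimal term of that sequence.
  For `l > 0` the cost of this choice is bounded, hence integrable.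

Applying the last point with `l ↓ l₀` yields `l * t + ∫ φ_l dP ≤ M + (l - l₀) * t + ε`.
-/

/-- The order-`p` optimal transport cost between two probability measures, for a
cost function `c : Z → Z → ℝ≥0∞`. -/
noncomputable def transportCost {Z : Type*} [MeasurableSpace Z]
    (c : Z → Z → ℝ≥0∞) (p : ℝ) (P Q : Measure Z) : ℝ≥0∞ :=
  (⨅ π ∈ {π : Measure (Z × Z) | IsProbabilityMeasure π ∧
      π.map Prod.fst = P ∧ π.map Prod.snd = Q},
    ∫⁻ z, c z.1 z.2 ^ p ∂π) ^ (1 / p)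

/-- The pairs (budget, reward) realised by transport plans: `q.1 ≥ 0` bounds the total cost of a
plan whose second marginal is `P`, and `q.2` is the integral of `ψ` against its first marginal. -/
def planSet {V : Type*} [MeasurableSpace V] (c : V → V → ℝ) (ψ : V → ℝ) (P : Measure V) :
    Set (ℝ × ℝ) :=
  {q | 0 ≤ q.1 ∧ ∃ π : Measure (V × V), IsProbabilityMeasure π ∧ π.map Prod.snd = P ∧
    ∫⁻ z, ENNReal.ofReal (c z.1 z.2) ∂π ≤ ENNReal.ofReal q.1 ∧ q.2 = ∫ z, ψ z.1 ∂π}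

/-- The penalised supremum `⨆ w, (ψ w - l * c w v)`, that is, the `c`-transform of `ψ` with
multiplier `l`. For bounded `ψ` and `0 ≤ l`, `0 ≤ c` the family is bounded above. -/
noncomputable def envelope {V : Type*} (c : V → V → ℝ) (ψ : V → ℝ) (l : ℝ) (v : V) : ℝ :=
  ⨆ w, (ψ w - l * c w v)

/-- A convex subset of the plane lying below height `M` on the half-plane `s ≤ t`, and having a
point of abscissa smaller than `t`, lies below a line of nonnegative slope through `(t, M)`. -/
theorem exists_multiplier {K : Set (ℝ × ℝ)} (hK : Convex ℝ K) {t M s₀ u₀ : ℝ}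
    (hM : ∀ q ∈ K, q.1 ≤ t → q.2 ≤ M) (h₀ : (s₀, u₀) ∈ K) (hs₀ : s₀ < t) :
    ∃ l : ℝ, 0 ≤ l ∧ ∀ q ∈ K, q.2 - M ≤ l * (q.1 - t) := by
  -- Slopes from `(t, M)` to points on the right never exceed slopes to points on the left.
  have key : ∀ q ∈ K, ∀ r ∈ K, t < q.1 → r.1 < t →
      (q.2 - M) / (q.1 - t) ≤ (M - r.2) / (t - r.1) := by
    intro q hq r hr hqt hrt
    have h1 : 0 < q.1 - t := by linarith
    have h2 : 0 < t - r.1 := by linarith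
    have h3 : 0 < q.1 - r.1 := by linarith
    have hmem : ((t - r.1) / (q.1 - r.1)) • q + ((q.1 - t) / (q.1 - r.1)) • r ∈ K :=
      hK hq hr (by positivity) (by positivity) (by field_simp; ring)
    have h4 := hM _ hmem (by
      simp only [Prod.fst_add, Prod.smul_fst, smul_eq_mul]
      apply le_of_eq
      field_simp
      ring)
    simp only [Prod.snd_add, Prod.smul_snd, smul_eq_mul] at h4
    rw [div_mul_eq_mul_div, div_mul_eq_mul_div, ← add_div, div_le_iff₀ h3] at h4
    rw [div_le_div_iff₀ h1 h2]
    nlinarith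
  -- The slope is the supremum of the right slopes; inserting `0` keeps it nonnegative.
  let S : Set ℝ := insert 0 {y | ∃ q ∈ K, t < q.1 ∧ y = (q.2 - M) / (q.1 - t)}
  have hub : ∀ r ∈ K, r.1 < t → (M - r.2) / (t - r.1) ∈ upperBounds S := by
    intro r hr hrt y hy
    rcases hy with rfl | ⟨q, hq, hqt, rfl⟩
    · have := hM r hr hrt.le
      exact div_nonneg (by linarith) (by linarith)
    · exact key q hq r hr hqt hrt
  have hbdd : BddAbove S := ⟨_, hub _ h₀ hs₀⟩
  refine ⟨sSup S, le_csSup hbdd (Set.mem_insert _ _), fun q hq => ?_⟩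
  rcases lt_trichotomy q.1 t with h | h | h
  · have h1 : sSup S ≤ _ := csSup_le ⟨0, Set.mem_insert _ _⟩ (hub q hq h)
    rw [le_div_iff₀ (by linarith)] at h1
    linarith
  · have := hM q hq h.le
    rw [h]; linarith
  · have h1 : (q.2 - M) / (q.1 - t) ≤ sSup S :=
      le_csSup hbdd (Set.mem_insert_of_mem _ ⟨q, hq, h, rfl⟩)
    rwa [div_le_iff₀ (by linarith)] at h1

theorem integrable_of_abs_le {Ω : Type*} [MeasurableSpace Ω] {μ : Measure Ω} [IsFiniteMeasure μ]
    {f : Ω → ℝ} (hf : Measurable f) {C : ℝ} (hC : ∀ x, |f x| ≤ C) : Integrable f μ :=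
  Integrable.of_bound hf.aestronglyMeasurable C (Filter.Eventually.of_forall hC)

theorem convex_planSet {V : Type*} [MeasurableSpace V] {c : V → V → ℝ} {ψ : V → ℝ}
    {P : Measure V} (hψ : Measurable ψ) {C : ℝ} (hC : ∀ v, |ψ v| ≤ C) :
    Convex ℝ (planSet c ψ P) := by
  rintro ⟨s₁, u₁⟩ ⟨hs₁, π₁, hπ₁, hm₁, hc₁, hu₁⟩ ⟨s₂, u₂⟩ ⟨hs₂, π₂, hπ₂, hm₂, hc₂, hu₂⟩ a b ha hb hab
  simp only at hs₁ hs₂ hc₁ hc₂ hu₁ hu₂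
  have hab' : ENNReal.ofReal a + ENNReal.ofReal b = 1 := by
    rw [← ENNReal.ofReal_add ha hb, hab, ENNReal.ofReal_one]
  have hi : ∀ π : Measure (V × V), IsProbabilityMeasure π → Integrable (fun z => ψ z.1) π :=
    fun π _ => integrable_of_abs_le (hψ.comp measurable_fst) (fun z => hC z.1)
  refine ⟨by simp; positivity, ENNReal.ofReal a • π₁ + ENNReal.ofReal b • π₂, ⟨?_⟩, ?_, ?_, ?_⟩
  · simp [hab']
  · rw [Measure.map_add _ _ measurable_snd, Measure.map_smul, Measure.map_smul, hm₁, hm₂,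
      ← add_smul, hab', one_smul]
  · rw [lintegral_add_measure, lintegral_smul_measure, lintegral_smul_measure]
    simp only [Prod.smul_mk, Prod.mk_add_mk, smul_eq_mul]
    rw [ENNReal.ofReal_add (by positivity) (by positivity), ENNReal.ofReal_mul ha,
      ENNReal.ofReal_mul hb]
    gcongr
  · rw [integral_add_measure ((hi π₁ hπ₁).smul_measure ENNReal.ofReal_ne_top)
      ((hi π₂ hπ₂).smul_measure ENNReal.ofReal_ne_top), integral_smul_measure,
      integral_smul_measure, ENNReal.toReal_ofReal ha, ENNReal.toReal_ofReal hb]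
    simp [hu₁, hu₂]

section Envelope

variable {V : Type*} {c : V → V → ℝ} {ψ : V → ℝ} {C l : ℝ}

theorem envelope_bddAbove (hc0 : ∀ w v, 0 ≤ c w v) (hC : ∀ v, |ψ v| ≤ C) (hl : 0 ≤ l) (v : V) :
    BddAbove (Set.range fun w => ψ w - l * c w v) := by
  refine ⟨C, ?_⟩
  rintro _ ⟨w, rfl⟩
  have := (abs_le.1 (hC w)).2
  have := mul_nonneg hl (hc0 w v)
  simp only; linarith

theorem le_envelope (hc0 : ∀ w v, 0 ≤ c w v) (hC : ∀ v, |ψ v| ≤ C) (hl : 0 ≤ l) (w v : V) :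
    ψ w - l * c w v ≤ envelope c ψ l v :=
  le_ciSup (envelope_bddAbove hc0 hC hl v) w

theorem abs_envelope_le (hc0 : ∀ w v, 0 ≤ c w v) (hcd : ∀ v, c v v = 0) (hC : ∀ v, |ψ v| ≤ C)
    (hl : 0 ≤ l) (v : V) : |envelope c ψ l v| ≤ C := by
  have : Nonempty V := ⟨v⟩
  rw [abs_le]
  constructor
  · have h := le_envelope hc0 hC hl v v
    rw [hcd] at h
    have := (abs_le.1 (hC v)).1
    linarith
  · refine ciSup_le fun w => ?_
    have := (abs_le.1 (hC w)).2
    have := mul_nonneg hl (hc0 w v)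
    linarith

/-- One sequence computes all the suprema `⨆ w, (ψ w - l * c w v)`, although `ψ` need not be
continuous: it is dense for the topology that `w ↦ (w, ψ w)` induces on `V`. -/
theorem exists_seq_nearly_optimal [TopologicalSpace V] [SecondCountableTopology V] [Nonempty V]
    (ψ : V → ℝ) (hcc : Continuous fun z : V × V => c z.1 z.2) :
    ∃ y : ℕ → V, ∀ (l : ℝ) (v w : V) (r : ℝ), r < ψ w - l * c w v →
      ∃ n, r < ψ (y n) - l * c (y n) v := by
  let G : Set (V × ℝ) := Set.range fun w => (w, ψ w)
  have : Nonempty G := ⟨⟨_, Set.mem_range_self (Classical.arbitrary V)⟩⟩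
  obtain ⟨d, hd⟩ := TopologicalSpace.exists_dense_seq G
  choose y hy using fun n => (d n).2
  refine ⟨y, fun l v w r hr => ?_⟩
  have hcont : Continuous fun q : G => q.1.2 - l * c q.1.1 v := by
    have h1 : Continuous fun q : G => (q.1.1, v) := by fun_prop
    have h2 : Continuous fun q : G => c q.1.1 v := hcc.comp h1
    fun_prop
  obtain ⟨n, hn⟩ := hd.exists_mem_open (isOpen_lt continuous_const hcont)
    ⟨⟨(w, ψ w), w, rfl⟩, hr⟩
  refine ⟨n, ?_⟩
  have h := hy n
  simp only [Set.mem_ofPred_eq, ← h] at hn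
  exact hn

theorem measurable_envelope [TopologicalSpace V] [SecondCountableTopology V] [MeasurableSpace V]
    [BorelSpace V] (hcc : Continuous fun z : V × V => c z.1 z.2)
    (hc0 : ∀ w v, 0 ≤ c w v) (hC : ∀ v, |ψ v| ≤ C) (hl : 0 ≤ l) :
    Measurable (envelope c ψ l) := by
  rcases isEmpty_or_nonempty V with hV | hV
  · exact measurable_of_empty _
  obtain ⟨y, hy⟩ := exists_seq_nearly_optimal ψ hcc
  have heq : envelope c ψ l = fun v => ⨆ n, (ψ (y n) - l * c (y n) v) := by
    funext v
    have hb : BddAbove (Set.range fun n => ψ (y n) - l * c (y n) v) :=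
      (envelope_bddAbove hc0 hC hl v).mono (by rintro _ ⟨n, rfl⟩; exact ⟨y n, rfl⟩)
    refine le_antisymm (ciSup_le fun w => le_of_forall_lt fun r hr => ?_)
      (ciSup_le fun n => le_envelope hc0 hC hl _ _)
    obtain ⟨n, hn⟩ := hy l v w r hr
    exact hn.trans_le (le_ciSup hb n)
  rw [heq]
  have hm : ∀ n, Measurable fun v => ψ (y n) - l * c (y n) v := fun n => by
    have h1 : Continuous fun v : V => (y n, v) := by fun_prop
    have h2 : Continuous fun v => c (y n) v := hcc.comp h1
    exact (continuous_const.sub (continuous_const.mul h2)).measurable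
  exact Measurable.iSup hm

/-- Weak duality. -/
theorem planSet_le_dual [TopologicalSpace V] [SecondCountableTopology V] [MeasurableSpace V]
    [BorelSpace V] {P : Measure V} (hψ : Measurable ψ)
    (hcc : Continuous fun z : V × V => c z.1 z.2)
    (hc0 : ∀ w v, 0 ≤ c w v) (hcd : ∀ v, c v v = 0) (hC : ∀ v, |ψ v| ≤ C) (hl : 0 ≤ l)
    {q : ℝ × ℝ} (hq : q ∈ planSet c ψ P) :
    q.2 ≤ l * q.1 + ∫ v, envelope c ψ l v ∂P := by
  obtain ⟨hs, π, hπ, hm, hc, hu⟩ := hq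
  have hme := measurable_envelope hcc hc0 hC hl
  have hci : Integrable (fun z : V × V => c z.1 z.2) π := by
    refine ⟨hcc.measurable.aestronglyMeasurable, ?_⟩
    rw [hasFiniteIntegral_iff_ofReal (Filter.Eventually.of_forall fun z => hc0 _ _)]
    exact hc.trans_lt ENNReal.ofReal_lt_top
  have hei : Integrable (fun z : V × V => envelope c ψ l z.2) π :=
    integrable_of_abs_le (hme.comp measurable_snd) (fun z => abs_envelope_le hc0 hcd hC hl z.2)
  have hcs : ∫ z, c z.1 z.2 ∂π ≤ q.1 := by
    rw [integral_eq_lintegral_of_nonneg_ae (Filter.Eventually.of_forall fun z => hc0 _ _)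
      hcc.measurable.aestronglyMeasurable]
    exact ENNReal.toReal_le_of_le_ofReal hs hc
  have hmap : ∫ v, envelope c ψ l v ∂P = ∫ z, envelope c ψ l z.2 ∂π := by
    rw [← hm, integral_map measurable_snd.aemeasurable hme.aestronglyMeasurable]
  calc q.2 = ∫ z, ψ z.1 ∂π := hu
    _ ≤ ∫ z, (l * c z.1 z.2 + envelope c ψ l z.2) ∂π := by
        refine integral_mono (integrable_of_abs_le (hψ.comp measurable_fst) (fun z => hC z.1))
          ((hci.const_mul l).add hei) fun z => ?_
        have := le_envelope hc0 hC hl z.1 z.2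
        simp only; linarith
    _ = l * ∫ z, c z.1 z.2 ∂π + ∫ v, envelope c ψ l v ∂P := by
        rw [integral_add (hci.const_mul l) hei, integral_const_mul, hmap]
    _ ≤ _ := by gcongr

/-- For `0 < l`, a plan carried by the graph of a countably valued map nearly attains the
penalised value `∫ φ_l dP`. -/
theorem exists_nearly_optimal [TopologicalSpace V] [SecondCountableTopology V] [MeasurableSpace V]
    [BorelSpace V] {P : Measure V} [IsProbabilityMeasure P] (hψ : Measurable ψ)
    (hcc : Continuous fun z : V × V => c z.1 z.2)
    (hc0 : ∀ w v, 0 ≤ c w v) (hcd : ∀ v, c v v = 0) (hC : ∀ v, |ψ v| ≤ C) (hl : 0 < l)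
    {ε : ℝ} (hε : 0 < ε) :
    ∃ q ∈ planSet c ψ P, ∫ v, envelope c ψ l v ∂P - ε ≤ q.2 - l * q.1 := by
  classical
  have : Nonempty V := nonempty_of_isProbabilityMeasure P
  obtain ⟨y, hy⟩ := exists_seq_nearly_optimal ψ hcc
  have hme := measurable_envelope hcc hc0 hC hl.le
  have hex : ∀ v, ∃ n, envelope c ψ l v - ε < ψ (y n) - l * c (y n) v := by
    intro v
    obtain ⟨w, hw⟩ := exists_lt_of_lt_ciSup
      (show envelope c ψ l v - ε < ⨆ w, (ψ w - l * c w v) by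
        change _ < envelope c ψ l v; linarith)
    exact hy l v w _ hw
  let T : V → V := fun v => y (Nat.find (hex v))
  have hT : Measurable T := by
    refine (measurable_from_nat (f := y)).comp (measurable_find hex fun n => ?_)
    have h1 : Continuous fun v : V => (y n, v) := by fun_prop
    have h2 : Continuous fun v => c (y n) v := hcc.comp h1
    exact measurableSet_lt (hme.sub_const ε)
      (continuous_const.sub (continuous_const.mul h2)).measurable
  have hTs : ∀ v, envelope c ψ l v - ε < ψ (T v) - l * c (T v) v := fun v => Nat.find_spec (hex v)
  have hTm : Measurable fun v => (T v, v) := hT.prodMk measurable_id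
  have hcm : Measurable fun v => c (T v) v := hcc.measurable.comp hTm
  have hci : Integrable (fun v => c (T v) v) P := by
    refine integrable_of_abs_le hcm (C := (2 * C + ε) / l) fun v => ?_
    rw [abs_of_nonneg (hc0 _ _), le_div_iff₀ hl]
    have h1 := (abs_le.1 (hC (T v))).2
    have h2 := (abs_le.1 (abs_envelope_le hc0 hcd hC hl.le v)).1
    have h3 := hTs v
    linarith
  have hψi : Integrable (fun v => ψ (T v)) P :=
    integrable_of_abs_le (hψ.comp hT) fun v => hC _
  have hei : Integrable (envelope c ψ l) P :=
    integrable_of_abs_le hme (abs_envelope_le hc0 hcd hC hl.le)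
  refine ⟨(∫ v, c (T v) v ∂P, ∫ v, ψ (T v) ∂P), ⟨integral_nonneg fun v => hc0 _ _,
    P.map fun v => (T v, v), Measure.isProbabilityMeasure_map hTm.aemeasurable, ?_, ?_, ?_⟩, ?_⟩
  · rw [Measure.map_map measurable_snd hTm]
    exact Measure.map_id
  · rw [lintegral_map hcc.measurable.ennreal_ofReal hTm,
      ofReal_integral_eq_lintegral_ofReal hci (Filter.Eventually.of_forall fun v => hc0 _ _)]
  · have hm : Measurable fun z : V × V => ψ z.1 := hψ.comp measurable_fst
    rw [integral_map hTm.aemeasurable hm.aestronglyMeasurable]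
  · calc ∫ v, envelope c ψ l v ∂P - ε = ∫ v, (envelope c ψ l v - ε) ∂P := by
          rw [integral_sub hei (integrable_const _)]; simp
      _ ≤ ∫ v, (ψ (T v) - l * c (T v) v) ∂P :=
          integral_mono (hei.sub (integrable_const _)) (hψi.sub (hci.const_mul l))
            fun v => (hTs v).le
      _ = _ := by rw [integral_sub hψi (hci.const_mul l), integral_const_mul]

end Envelope

/-- `(a, Δ) ↦ g⁻¹ (a, x + Δ)` is onto `V`, so the double supremum is a supremum over `V`. -/
theorem iSup_iSup_eq_envelope {V A X : Type*} [TopologicalSpace V] [TopologicalSpace A]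
    [NormedAddCommGroup X] [Nonempty A] (g : V ≃ₜ A × X) {p l C : ℝ} {ψ : V → ℝ}
    (hC : ∀ v, |ψ v| ≤ C) (hl : 0 ≤ l) (v : V) :
    (⨆ a : A, ⨆ Δ : X, (ψ (g.symm (a, (g v).2 + Δ)) - l * ‖Δ‖ ^ p)) =
      envelope (fun w v => ‖(g w).2 - (g v).2‖ ^ p) ψ l v := by
  have : Nonempty V := ⟨v⟩
  have hc0 : ∀ w v : V, 0 ≤ ‖(g w).2 - (g v).2‖ ^ p := fun w v => by positivity
  have hle : ∀ a Δ, ψ (g.symm (a, (g v).2 + Δ)) - l * ‖Δ‖ ^ p ≤ C := fun a Δ => by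
    have := (abs_le.1 (hC (g.symm (a, (g v).2 + Δ)))).2
    have : 0 ≤ l * ‖Δ‖ ^ p := by positivity
    linarith
  refine le_antisymm (ciSup_le fun a => ciSup_le fun Δ => ?_) (ciSup_le fun w => ?_)
  · have h := le_envelope (c := fun w v => ‖(g w).2 - (g v).2‖ ^ p) hc0 hC hl
      (g.symm (a, (g v).2 + Δ)) v
    simpa using h
  · have h1 : BddAbove (Set.range fun a => ⨆ Δ : X,
        (ψ (g.symm (a, (g v).2 + Δ)) - l * ‖Δ‖ ^ p)) :=
      ⟨C, by rintro _ ⟨a, rfl⟩; exact ciSup_le (hle a)⟩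
    have h2 : BddAbove (Set.range fun Δ : X =>
        ψ (g.symm ((g w).1, (g v).2 + Δ)) - l * ‖Δ‖ ^ p) :=
      ⟨C, by rintro _ ⟨Δ, rfl⟩; exact hle _ Δ⟩
    refine le_trans (le_trans (le_of_eq ?_) (le_ciSup h2 ((g w).2 - (g v).2)))
      (le_ciSup h1 (g w).1)
    simp

/-- Causally fair strong duality: for the causally fair cost
`d(v, v') = ‖x_v − x_{v'}‖` induced by the semi-latent homeomorphism
`g : V ≃ₜ A × X`, `g v = (a_v, x_v)`, the worst-case expectation of a bounded upper
semicontinuous `ψ` over the Wasserstein ball of radius `δ` around `P` equals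
`inf_{λ ≥ 0} { λ δ^p + ∫ sup_{a ∈ A} sup_{Δ ∈ X} (ψ(g⁻¹(a, x_v + Δ)) − λ ‖Δ‖^p) dP(v) }`. -/
theorem causally_fair_strong_duality
    {V A X : Type*}
    [TopologicalSpace V] [PolishSpace V] [MeasurableSpace V] [BorelSpace V]
    [MetricSpace A] [CompactSpace A] [Nonempty A]
    [NormedAddCommGroup X] [NormedSpace ℝ X] [FiniteDimensional ℝ X]
    (g : V ≃ₜ A × X)
    {p : ℝ} (hp : 1 ≤ p) {δ : ℝ} (hδ : 0 < δ)
    (P : Measure V) [IsProbabilityMeasure P]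
    (ψ : V → ℝ) (hψc : UpperSemicontinuous ψ) (hψb : ∃ C, ∀ v, |ψ v| ≤ C) :
    sSup {r : ℝ | ∃ Q : Measure V, IsProbabilityMeasure Q ∧
        transportCost (fun v v' => ENNReal.ofReal ‖(g v).2 - (g v').2‖) p Q P
          ≤ ENNReal.ofReal δ ∧
        r = ∫ v, ψ v ∂Q} =
      ⨅ l : {l : ℝ // 0 ≤ l},
        ((l : ℝ) * δ ^ p +
          ∫ v, (⨆ a : A, ⨆ Δ : X,
            (ψ (g.symm (a, (g v).2 + Δ)) - (l : ℝ) * ‖Δ‖ ^ p)) ∂P) := by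
  obtain ⟨C, hC⟩ := hψb
  have hp0 : 0 < p := by linarith
  have hψ : Measurable ψ := hψc.measurable
  let c : V → V → ℝ := fun w v => ‖(g w).2 - (g v).2‖ ^ p
  have hc0 : ∀ w v, 0 ≤ c w v := fun w v => by positivity
  have hcd : ∀ v, c v v = 0 := fun v => by simp [c, Real.zero_rpow hp0.ne']
  have hcc : Continuous fun z : V × V => c z.1 z.2 := by
    have : Continuous fun z : V × V => ‖(g z.1).2 - (g z.2).2‖ := by fun_prop
    exact this.rpow_const fun _ => Or.inr hp0.le
  have hpow : ∀ z : V × V, ENNReal.ofReal ‖(g z.1).2 - (g z.2).2‖ ^ p =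
      ENNReal.ofReal (c z.1 z.2) := fun z =>
    ENNReal.ofReal_rpow_of_nonneg (norm_nonneg _) hp0.le
  have hδp : 0 < δ ^ p := Real.rpow_pos_of_pos hδ p
  have hball : ∀ I : ℝ≥0∞, I ^ (1 / p) ≤ ENNReal.ofReal δ ↔ I ≤ ENNReal.ofReal (δ ^ p) := by
    intro I
    rw [← ENNReal.ofReal_rpow_of_nonneg hδ.le hp0.le, one_div, ENNReal.rpow_inv_le_iff hp0]
  set R : Set ℝ := {r : ℝ | ∃ Q : Measure V, IsProbabilityMeasure Q ∧
        transportCost (fun v v' => ENNReal.ofReal ‖(g v).2 - (g v').2‖) p Q P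
          ≤ ENNReal.ofReal δ ∧
        r = ∫ v, ψ v ∂Q} with hR
  have hKR : ∀ q ∈ planSet c ψ P, q.1 ≤ δ ^ p → q.2 ∈ R := by
    rintro q ⟨hs, π, hπ, hm, hcost, hu⟩ hle
    refine ⟨π.map Prod.fst, Measure.isProbabilityMeasure_map measurable_fst.aemeasurable, ?_, ?_⟩
    · rw [transportCost, hball]
      refine (iInf₂_le π ⟨hπ, rfl, hm⟩).trans ?_
      simp only [hpow]
      exact hcost.trans (ENNReal.ofReal_le_ofReal hle)
    · rw [hu, integral_map measurable_fst.aemeasurable hψ.aestronglyMeasurable]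
  -- The infimum defining the transport cost is only approached, so the budget is enlarged by `ε`.
  have hRK : ∀ r ∈ R, ∀ ε > 0, (δ ^ p + ε, r) ∈ planSet c ψ P := by
    rintro r ⟨Q, hQ, hcost, rfl⟩ ε hε
    rw [transportCost, hball] at hcost
    have hlt := hcost.trans_lt
      ((ENNReal.ofReal_lt_ofReal_iff (by positivity)).2 (lt_add_of_pos_right (δ ^ p) hε))
    simp only [iInf_lt_iff] at hlt
    obtain ⟨π, ⟨hπ, hm1, hm2⟩, hlt⟩ := hlt
    refine ⟨by positivity, π, hπ, hm2, ?_, ?_⟩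
    · simp only [hpow] at hlt
      exact hlt.le
    · simp only
      rw [← hm1, integral_map measurable_fst.aemeasurable hψ.aestronglyMeasurable]
  -- The diagonal plan keeps `P` in place at zero cost.
  have h0 : ((0 : ℝ), ∫ v, ψ v ∂P) ∈ planSet c ψ P := by
    have hdm : Measurable fun v : V => (v, v) := measurable_id.prodMk measurable_id
    refine ⟨le_rfl, P.map fun v => (v, v),
      Measure.isProbabilityMeasure_map hdm.aemeasurable, ?_, ?_, ?_⟩
    · rw [Measure.map_map measurable_snd hdm]
      exact Measure.map_id
    · rw [lintegral_map hcc.measurable.ennreal_ofReal hdm]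
      simp [hcd]
    · have hm : Measurable fun z : V × V => ψ z.1 := hψ.comp measurable_fst
      rw [integral_map hdm.aemeasurable hm.aestronglyMeasurable]
  have hweak : ∀ r ∈ R, ∀ l : ℝ, 0 ≤ l → r ≤ l * δ ^ p + ∫ v, envelope c ψ l v ∂P := by
    intro r hr l hl
    refine le_of_forall_pos_le_add fun ε hε => ?_
    have h := planSet_le_dual hψ hcc hc0 hcd hC hl (hRK r hr (ε / (l + 1)) (by positivity))
    simp only at h
    have h2 : l * (ε / (l + 1)) ≤ ε := by
      rw [mul_div_assoc', div_le_iff₀ (by positivity)]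
      nlinarith
    linarith
  have hRne : R.Nonempty := ⟨_, hKR _ h0 hδp.le⟩
  have hRb : BddAbove R := ⟨_, fun r hr => hweak r hr 0 le_rfl⟩
  have hdual : ∀ l : {l : ℝ // 0 ≤ l}, ((l : ℝ) * δ ^ p +
      ∫ v, (⨆ a : A, ⨆ Δ : X, (ψ (g.symm (a, (g v).2 + Δ)) - (l : ℝ) * ‖Δ‖ ^ p)) ∂P) =
      l * δ ^ p + ∫ v, envelope c ψ l v ∂P := fun l => by
    simp only [iSup_iSup_eq_envelope g hC l.2, c]
  simp only [hdual]
  have : Nonempty {l : ℝ // 0 ≤ l} := ⟨⟨0, le_rfl⟩⟩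
  apply le_antisymm
  · exact csSup_le hRne fun r hr => le_ciInf fun l => hweak r hr l l.2
  · obtain ⟨l₀, hl₀, hmul⟩ := exists_multiplier (convex_planSet hψ hC)
      (fun q hq hle => le_csSup hRb (hKR q hq hle)) h0 hδp
    have hbelow : BddBelow (Set.range fun l : {l : ℝ // 0 ≤ l} =>
        (l : ℝ) * δ ^ p + ∫ v, envelope c ψ l v ∂P) := by
      obtain ⟨r, hr⟩ := hRne
      exact ⟨r, by rintro _ ⟨l, rfl⟩; exact hweak r hr l l.2⟩
    refine le_of_forall_pos_le_add fun ε hε => ?_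
    -- `l` exceeds `l₀` strictly, so that it is positive and `(l - l₀) * δ ^ p = ε / 2`.
    have hη : 0 < ε / 2 / δ ^ p := by positivity
    have hlpos : 0 < l₀ + ε / 2 / δ ^ p := by linarith
    obtain ⟨q, hq, hopt⟩ := exists_nearly_optimal (P := P) hψ hcc hc0 hcd hC hlpos (half_pos hε)
    refine (ciInf_le hbelow ⟨l₀ + ε / 2 / δ ^ p, hlpos.le⟩).trans ?_
    simp only
    have h1 := hmul q hq
    have h2 : 0 ≤ ε / 2 / δ ^ p * q.1 := mul_nonneg hη.le hq.1
    have h3 : ε / 2 / δ ^ p * δ ^ p = ε / 2 := div_mul_cancel₀ _ hδp.ne'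
    nlinarith
end

section
/- Let V be a Polish space, A a compact metric space, X = ℝ^m with a norm ‖·‖, and g : V → A × X a homeomorphism; write g(v) = (a_v, x_v) and define the causally fair cost d(v, v') = ‖x_v − x_{v'}‖. Fix p ∈ [1, ∞), δ > 0, a Borel probability measure P on V, and a bounded upper semicontinuous function ψ : V → ℝ. Let μ be the pushforward of P under v ↦ x_v, and let ‖·‖ also denote the cost (x, x') ↦ ‖x − x'‖ on X. Then sup { ∫_V ψ dQ : Q a Borel probability measure on V with W_{d,p}(Q, P) ≤ δ } = sup { ∫_X sup_{a ∈ A} ψ(g⁻¹(a, x)) dQ'(x) : Q' a Borel probability measure on X with W_{‖·‖,p}(Q', μ) ≤ δ }. -/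
/-!
The two suprema agree because `ψ (g⁻¹ (·, x))` attains its maximum over `A` at a point `s x` that
depends measurably on `x` (`exists_measurable_argmax`). Pushing a measure `Q` on `V` forward to `X`
does not increase the transport cost (`transportCost_map_le`) and, as `ψ v ≤ ψ (g⁻¹ (s x_v, x_v))`,
does not decrease the objective. Conversely, pushing `Q'` on `X` forward by the section
`x ↦ g⁻¹ (s x, x)` keeps the objective, and does not increase the transport cost to `P`
(`transportCost_map_section_le`): a coupling of `Q'` with the law of `x_v` under `P` is glued with
the conditional law of `v` given `x_v`.

The measurable selection is elementary after replacing the compact metric space `A` by the Cantor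
set, of which it is a continuous image: in a compact set of reals the least maximizer can be chosen,
and its sublevel sets are described by countably many projections of closed sets along a compact
factor, which are closed.
-/

open MeasureTheory ENNReal

open ProbabilityTheory

lemma usc_comp {Y Z : Type*} [TopologicalSpace Y] [TopologicalSpace Z] {f : Z → ℝ}
    (hf : UpperSemicontinuous f) {h : Y → Z} (hh : Continuous h) :
    UpperSemicontinuous fun y => f (h y) :=
  upperSemicontinuous_iff_isClosed_preimage.2 fun r => (hf.isClosed_preimage r).preimage hh

/-- Maximizers of an upper semicontinuous function over a compact set of reals can be chosen
measurably in the parameter: the least maximizer works. -/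
lemma exists_measurable_argmax_real {X : Type*} [TopologicalSpace X] [MeasurableSpace X]
    [OpensMeasurableSpace X] {K : Set ℝ} (hK : IsCompact K) (hne : K.Nonempty)
    (H : K × X → ℝ) (hH : UpperSemicontinuous H) :
    ∃ s : X → K, Measurable s ∧ ∀ x k, H (k, x) ≤ H (s x, x) := by
  have : CompactSpace K := isCompact_iff_compactSpace.1 hK
  have : Nonempty K := hne.to_subtype
  have hsec : ∀ x, UpperSemicontinuous fun k => H (k, x) := fun x =>
    usc_comp hH (by fun_prop : Continuous fun k : K => (k, x))
  have hmax : ∀ x, ∃ m : K, ∀ k, H (k, x) ≤ H (m, x) := fun x => by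
    obtain ⟨m, -, hm⟩ := ((hsec x).upperSemicontinuousOn Set.univ).exists_isMaxOn
      Set.univ_nonempty isCompact_univ
    exact ⟨m, fun k => hm (Set.mem_univ k)⟩
  choose m hm using hmax
  have hleast : ∀ x, ∃ k, IsLeast {k | H (m x, x) ≤ H (k, x)} k := fun x =>
    ((hsec x).isClosed_preimage (H (m x, x))).isCompact.exists_isLeast
      ⟨m x, le_refl (H (m x, x))⟩
  choose s hs using hleast
  refine ⟨s, ?_, fun x k => (hm x k).trans (hs x).1⟩
  -- Projections of closed sets along the compact factor `K` are closed.
  have hproj : ∀ (T : Set K), IsClosed T → ∀ r, MeasurableSet {x | ∃ k ∈ T, r ≤ H (k, x)} := by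
    intro T hT r
    have h := isClosedMap_snd_of_compactSpace (X := K) (Y := X) _
      ((hT.preimage continuous_fst).inter (hH.isClosed_preimage r))
    convert h.measurableSet using 1
    ext x
    simp
  suffices h : Measurable fun x => (s x : ℝ) from Measurable.subtype_mk h
  refine measurable_of_Iic fun t => ?_
  -- `s x ≤ t` iff the maximum over `K ∩ (-∞, t]` equals the maximum over `K`; rational levels
  -- suffice to compare the two.
  have hTc : IsClosed {k : K | (k : ℝ) ≤ t} := isClosed_Iic.preimage continuous_subtype_val
  have key : (fun x => (s x : ℝ)) ⁻¹' Set.Iic t = ⋂ q : ℚ,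
      ({x | ∃ k ∈ {k : K | (k : ℝ) ≤ t}, (q : ℝ) ≤ H (k, x)} ∪
        {x | ∃ k ∈ (Set.univ : Set K), (q : ℝ) ≤ H (k, x)}ᶜ) := by
    ext x
    simp only [Set.mem_preimage, Set.mem_Iic, Set.mem_iInter, Set.mem_union, Set.mem_ofPred_eq,
      Set.mem_compl_iff, Set.mem_univ, true_and]
    constructor
    · intro hx q
      by_cases hq : ∃ k, (q : ℝ) ≤ H (k, x)
      · obtain ⟨k, hk⟩ := hq
        exact Or.inl ⟨s x, hx, hk.trans ((hm x k).trans (hs x).1)⟩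
      · exact Or.inr hq
    · intro h
      -- Otherwise every `k ≤ t` is strictly suboptimal, and a rational separates the two maxima.
      by_contra hx
      have hlt : ∀ k : K, (k : ℝ) ≤ t → H (k, x) < H (m x, x) := fun k hk => by
        by_contra hge
        exact hx (le_trans (show (s x : ℝ) ≤ k from (hs x).2 (not_lt.1 hge)) hk)
      rcases Set.eq_empty_or_nonempty {k : K | (k : ℝ) ≤ t} with he | hn
      · obtain ⟨q, hq⟩ := exists_rat_lt (H (m x, x))
        rcases h q with ⟨k, hk, -⟩ | h'
        · exact (Set.eq_empty_iff_forall_notMem.1 he k) hk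
        · exact h' ⟨_, hq.le⟩
      · obtain ⟨k₀, hk₀, hk₀max⟩ := ((hsec x).upperSemicontinuousOn _).exists_isMaxOn hn
          hTc.isCompact
        obtain ⟨q, hq₁, hq₂⟩ := exists_rat_btwn (hlt k₀ hk₀)
        rcases h q with ⟨k, hk, hqk⟩ | h'
        · exact absurd (hqk.trans (hk₀max hk)) (not_le.2 hq₁)
        · exact h' ⟨_, hq₂.le⟩
  rw [key]
  exact MeasurableSet.iInter fun q =>
    (hproj _ hTc q).union (hproj _ isClosed_univ q).compl

/-- Measurable selection of maximizers of an upper semicontinuous function over a compact metric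
space. -/
lemma exists_measurable_argmax {A X : Type*} [MetricSpace A] [CompactSpace A] [Nonempty A]
    [MeasurableSpace A] [BorelSpace A] [TopologicalSpace X] [MeasurableSpace X]
    [OpensMeasurableSpace X] (H : A × X → ℝ) (hH : UpperSemicontinuous H) :
    ∃ s : X → A, Measurable s ∧ ∀ x a, H (a, x) ≤ H (s x, x) := by
  obtain ⟨f, hf, hsurj⟩ := exists_nat_bool_continuous_surjective_of_compact A
  have hφ : Continuous (f ∘ cantorSetHomeomorphNatToBool) :=
    hf.comp cantorSetHomeomorphNatToBool.continuous
  obtain ⟨s, hs, hmax⟩ := exists_measurable_argmax_real isCompact_cantorSet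
    ⟨0, zero_mem_cantorSet⟩
    (fun z : cantorSet × X => H ((f ∘ cantorSetHomeomorphNatToBool) z.1, z.2))
    (usc_comp hH (by fun_prop))
  refine ⟨fun x => (f ∘ cantorSetHomeomorphNatToBool) (s x), hφ.measurable.comp hs, fun x a => ?_⟩
  obtain ⟨k, rfl⟩ := (hsurj.comp cantorSetHomeomorphNatToBool.surjective) a
  exact hmax x k

lemma transportCost_map_le {V X : Type*} [MeasurableSpace V] [MeasurableSpace X] {f : V → X}
    (hf : Measurable f) {c : X → X → ℝ≥0∞} (hc : Measurable fun z : X × X => c z.1 z.2) {p : ℝ}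
    (hp : 0 ≤ 1 / p) (Q P : Measure V) :
    transportCost c p (Q.map f) (P.map f) ≤ transportCost (fun v v' => c (f v) (f v')) p Q P := by
  refine ENNReal.rpow_le_rpow (le_iInf₂ ?_) hp
  rintro π ⟨hπ, rfl, rfl⟩
  have hff : Measurable (Prod.map f f) := hf.prodMap hf
  refine (iInf₂_le (π.map (Prod.map f f))
    ⟨Measure.isProbabilityMeasure_map hff.aemeasurable, ?_, ?_⟩).trans ?_
  rotate_left
  · rw [Measure.map_map measurable_fst hff, Measure.map_map hf measurable_fst]
    rfl
  · rw [Measure.map_map measurable_snd hff, Measure.map_map hf measurable_snd]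
    rfl
  · rw [lintegral_map (hc.pow_const p) hff]
    rfl

/-- Lifting a measure on `X` to `V` along a measurable section `t` of `f` does not increase
the transport cost to `P`, when the cost on `V` only depends on `f`. -/
lemma transportCost_map_section_le {V X : Type*} [MeasurableSpace V] [StandardBorelSpace V]
    [MeasurableSpace X] [MeasurableEq X] {f : V → X} (hf : Measurable f) {t : X → V}
    (ht : Measurable t) (hft : ∀ x, f (t x) = x) {c : X → X → ℝ≥0∞}
    (hc : Measurable fun z : X × X => c z.1 z.2) {p : ℝ} (hp : 0 ≤ 1 / p)
    (Q' : Measure X) (P : Measure V) [IsProbabilityMeasure P] :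
    transportCost (fun v v' => c (f v) (f v')) p (Q'.map t) P
      ≤ transportCost c p Q' (P.map f) := by
  have : Nonempty V := nonempty_of_isProbabilityMeasure P
  refine ENNReal.rpow_le_rpow (le_iInf₂ ?_) hp
  rintro π ⟨hπ, hπ₁, hπ₂⟩
  -- `τ` is the joint law of `((x, x'), v')` with `v'` drawn from the conditional law given `x'`.
  let κ : Kernel X V := condDistrib id f P
  let τ : Measure ((X × X) × V) := π ⊗ₘ κ.comap Prod.snd measurable_snd
  have hτ₁ : τ.map Prod.fst = π := Measure.fst_compProd π _
  have hτ₂ : τ.map (fun z => (z.1.2, z.2)) = P.map fun v => (f v, v) := by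
    have h := compProd_map_condDistrib (mβ := ‹MeasurableSpace X›) (X := f) (Y := id) (μ := P) aemeasurable_id
    simp only [id] at h
    rw [← h, ← hπ₂]
    ext S hS
    have hm : Measurable fun z : (X × X) × V => (z.1.2, z.2) := by fun_prop
    rw [Measure.map_apply hm hS, Measure.compProd_apply (hm hS), Measure.compProd_apply hS,
      lintegral_map (Kernel.measurable_kernel_prodMk_left hS) measurable_snd]
    rfl
  have hae : ∀ᵐ z ∂τ, f z.2 = z.1.2 := by
    have hm : Measurable fun z : (X × X) × V => (z.1.2, z.2) := by fun_prop
    have hset : MeasurableSet {y : X × V | f y.2 = y.1} :=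
      measurableSet_eq_fun (hf.comp measurable_snd) measurable_fst
    have h : ∀ᵐ y ∂(τ.map fun z => (z.1.2, z.2)), f y.2 = y.1 := by
      rw [hτ₂]
      refine (ae_map_iff (by fun_prop : Measurable fun v => (f v, v)).aemeasurable hset).2 ?_
      exact Filter.Eventually.of_forall fun _ => rfl
    exact ae_of_ae_map hm.aemeasurable h
  have hG : Measurable fun z : (X × X) × V => (t z.1.1, z.2) := by fun_prop
  refine (iInf₂_le (τ.map fun z => (t z.1.1, z.2))
    ⟨Measure.isProbabilityMeasure_map hG.aemeasurable, ?_, ?_⟩).trans ?_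
  rotate_left
  · rw [Measure.map_map measurable_fst hG, ← hπ₁, ← hτ₁, Measure.map_map measurable_fst
      measurable_fst, Measure.map_map ht (measurable_fst.comp measurable_fst)]
    rfl
  · rw [Measure.map_map measurable_snd hG]
    have h := congrArg (Measure.map Prod.snd) hτ₂
    rw [Measure.map_map measurable_snd (by fun_prop), Measure.map_map measurable_snd
      (by fun_prop)] at h
    exact h.trans Measure.map_id
  · have hcV : Measurable fun z : V × V => c (f z.1) (f z.2) ^ p :=
      (hc.comp (hf.prodMap hf)).pow_const p
    rw [lintegral_map hcV hG]
    conv_rhs => rw [← hτ₁, lintegral_map (hc.pow_const p) measurable_fst]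
    refine (lintegral_congr_ae ?_).le
    filter_upwards [hae] with z hz
    simp only [hft, hz]

/-- Decomposition of the worst-case expectation for a causally fair cost: the supremum
of `∫ ψ dQ` over the Wasserstein ball (cost `d(v, v') = ‖x_v − x_{v'}‖`) equals the
supremum, over the Wasserstein ball on the non-sensitive coordinates around the
pushforward `μ = (v ↦ x_v)₟P`, of `∫ sup_{a ∈ A} ψ(g⁻¹(a, x)) dQ'(x)`. -/
theorem causally_fair_duality_decomposition
    {V A X : Type*}
    [TopologicalSpace V] [PolishSpace V] [MeasurableSpace V] [BorelSpace V]
    [MetricSpace A] [CompactSpace A] [Nonempty A]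
    [NormedAddCommGroup X] [NormedSpace ℝ X] [FiniteDimensional ℝ X]
    [MeasurableSpace X] [BorelSpace X]
    (g : V ≃ₜ A × X)
    {p : ℝ} (hp : 1 ≤ p) {δ : ℝ} (hδ : 0 < δ)
    (P : Measure V) [IsProbabilityMeasure P]
    (ψ : V → ℝ) (hψc : UpperSemicontinuous ψ) (hψb : ∃ C, ∀ v, |ψ v| ≤ C) :
    sSup {r : ℝ | ∃ Q : Measure V, IsProbabilityMeasure Q ∧
        transportCost (fun v v' => ENNReal.ofReal ‖(g v).2 - (g v').2‖) p Q P
          ≤ ENNReal.ofReal δ ∧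
        r = ∫ v, ψ v ∂Q} =
      sSup {r : ℝ | ∃ Q' : Measure X, IsProbabilityMeasure Q' ∧
        transportCost (fun x x' : X => ENNReal.ofReal ‖x - x'‖) p Q'
            (P.map (fun v => (g v).2))
          ≤ ENNReal.ofReal δ ∧
        r = ∫ x, (⨆ a : A, ψ (g.symm (a, x))) ∂Q'} := by
  have : ProperSpace X := FiniteDimensional.proper_real X
  let : MeasurableSpace A := borel A
  have : BorelSpace A := ⟨rfl⟩
  obtain ⟨C, hC⟩ := hψb
  obtain ⟨s, hs, hsmax⟩ := exists_measurable_argmax (fun z : A × X => ψ (g.symm z))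
    (usc_comp hψc g.symm.continuous)
  have hf : Measurable (fun v => (g v).2) := (continuous_snd.comp g.continuous).measurable
  have ht : Measurable (fun x => g.symm (s x, x)) :=
    g.symm.continuous.measurable.comp (hs.prodMk measurable_id)
  have hψm : Measurable ψ := hψc.measurable
  have hsup : ∀ x, (⨆ a : A, ψ (g.symm (a, x))) = ψ (g.symm (s x, x)) := fun x =>
    le_antisymm (ciSup_le fun a => hsmax x a)
      (le_ciSup (f := fun a => ψ (g.symm (a, x)))
        ⟨ψ (g.symm (s x, x)), by rintro _ ⟨a, rfl⟩; exact hsmax x a⟩ (s x))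
  have hc : Measurable (fun z : X × X => ENNReal.ofReal ‖z.1 - z.2‖) := by fun_prop
  have hp0 : 0 ≤ 1 / p := by positivity
  simp only [hsup]
  set SV := {r : ℝ | ∃ Q : Measure V, IsProbabilityMeasure Q ∧
        transportCost (fun v v' => ENNReal.ofReal ‖(g v).2 - (g v').2‖) p Q P
          ≤ ENNReal.ofReal δ ∧
        r = ∫ v, ψ v ∂Q} with hSV
  set SX := {r : ℝ | ∃ Q' : Measure X, IsProbabilityMeasure Q' ∧
        transportCost (fun x x' : X => ENNReal.ofReal ‖x - x'‖) p Q'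
            (P.map (fun v => (g v).2))
          ≤ ENNReal.ofReal δ ∧
        r = ∫ x, ψ (g.symm (s x, x)) ∂Q'} with hSX
  have hint : ∀ {Z : Type _} [MeasurableSpace Z] (R : Measure Z) [IsProbabilityMeasure R]
      (t : Z → V), Measurable t → Integrable (fun z => ψ (t z)) R := fun R _ t htm =>
    Integrable.of_bound (hψm.comp htm).aestronglyMeasurable C
      (Filter.Eventually.of_forall fun z => by simpa using hC (t z))
  have hXV : SX ⊆ SV := by
    rintro r ⟨Q', hQ', hcost, rfl⟩
    refine ⟨Q'.map (fun x => g.symm (s x, x)), Measure.isProbabilityMeasure_map ht.aemeasurable,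
      ?_, ?_⟩
    · exact (transportCost_map_section_le (c := fun x x' : X => ENNReal.ofReal ‖x - x'‖) hf ht
        (fun x => by simp) hc hp0 Q' P).trans hcost
    · rw [integral_map ht.aemeasurable hψm.aestronglyMeasurable]
  have hVX : ∀ r ∈ SV, ∃ r' ∈ SX, r ≤ r' := by
    rintro r ⟨Q, hQ, hcost, rfl⟩
    refine ⟨_, ⟨Q.map (fun v => (g v).2), Measure.isProbabilityMeasure_map hf.aemeasurable,
      (transportCost_map_le (c := fun x x' : X => ENNReal.ofReal ‖x - x'‖) hf hc hp0
        Q P).trans hcost, rfl⟩, ?_⟩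
    rw [integral_map hf.aemeasurable (f := fun x => ψ (g.symm (s x, x)))
      (hψm.comp ht).aestronglyMeasurable]
    refine integral_mono (hint Q _ measurable_id) (hint Q _ (ht.comp hf)) fun v => ?_
    simpa using hsmax (g v).2 (g v).1
  have hbd : BddAbove SV := by
    refine ⟨C, ?_⟩
    rintro r ⟨Q, hQ, -, rfl⟩
    calc ∫ v, ψ v ∂Q ≤ ∫ _, C ∂Q :=
          integral_mono (hint Q _ measurable_id) (integrable_const C)
            fun v => (abs_le.1 (hC v)).2
      _ = C := by simp
  rcases SV.eq_empty_or_nonempty with he | hne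
  · have heX : SX = ∅ := Set.subset_empty_iff.1 (hXV.trans he.subset)
    rw [he, heX]
  · obtain ⟨r, hr⟩ := hne
    obtain ⟨r', hr', -⟩ := hVX r hr
    refine le_antisymm (csSup_le ⟨r, hr⟩ fun q hq => ?_) (csSup_le_csSup hbd ⟨r', hr'⟩ hXV)
    obtain ⟨q', hq', hle⟩ := hVX q hq
    exact hle.trans (le_csSup (hbd.mono hXV) hq')
end

section
/- Fix n, an invertible matrix M ∈ ℝ^{n×n}, a set I of coordinates with complement J, a norm ‖·‖ on ℝ^J with dual norm ‖·‖_*, and take the sensitive value set A = ℝ^I (so diam(A) = ∞). For v ∈ ℝⁿ write P_A(u), P_X(u) for the I- and J-coordinates of u ∈ ℝⁿ. On Z = ℝⁿ × ℝ define the cost c((v, y), (v', y')) = ‖P_X(M⁻¹ v) − P_X(M⁻¹ v')‖ if y = y' and +∞ otherwise. Fix p ∈ [1, ∞), δ > 0, samples (v₁, y₁), …, (v_N, y_N), the empirical measure P_N = (1/N) Σ δ_{(v_i, y_i)}, τ ≥ 0, and let h : ℝ → ℝ be one of t ↦ |t|, t ↦ max(0, t), t ↦ |t − τ|, t ↦ max(0,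 t − τ). If θ ∈ ℝⁿ satisfies P_A(Mᵀ θ) = 0, then sup { ∫ h(y − ⟨θ, v⟩)^p dQ(v, y) : Q a probability measure on Z with W_{c,p}(Q, P_N) ≤ δ } = ( ( (1/N) Σ_{i=1}^N h(y_i − ⟨θ, v_i⟩)^p )^{1/p} + δ ‖P_X(Mᵀ θ)‖_* )^p. -/
/-!
Write `t = y - ⟨θ, v⟩` for the residual and `D` for the dual norm of `P_X(Mᵀθ)`. Since `Mᵀθ`
vanishes on the sensitive coordinates, residuals of two points with the same label differ by
`⟨P_X(Mᵀθ), P_X(M⁻¹v') - P_X(M⁻¹v)⟩` (`pairing_eq`), hence by at most `D` times the cost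
(`abs_pairing_le`).

Upper bound: `h` is `1`-Lipschitz, so Minkowski's inequality along any coupling
(`lp_le_add_transportCost`) shows that the `L^p` norm of the loss under `Q` exceeds its empirical
`L^p` norm by at most `D * δ` (`upper_bound`).

Lower bound: for a direction `x` in the unit ball with `d = ⟨P_X(Mᵀθ), x⟩ ≥ 0`, moving part of each
atom along `x` shifts its residual by `d` per unit of cost (`exists_measure`). If the empirical
risk `E ^ p` is positive, move atom `i` by `δ / E * h (t i)` in the direction in which `h` grows
with slope one: the loss is multiplied by `1 + δ * d / E`, which is the equality case of
Minkowski's inequality. If `E = 0`, move a fraction `ε` of the mass by `δ / ε ^ (1 / p)` and let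
`ε → 0`; the supremum need not be attained then. Both cases are in `le_sSup_of_mem`. The supremum
over `x` turns `d` into `D`. All norm estimates use that linear functionals on a
finite-dimensional space are bounded for every norm, so that the supremum defining `D` is finite.
-/

open MeasureTheory ENNReal Matrix

/-! ### Norms and dual norms in finite dimension -/

lemma norm_like_nonneg {E : Type*} [AddCommGroup E] [Module ℝ E] {nn : E → ℝ}
    (h0 : ∀ x, nn x = 0 ↔ x = 0) (hadd : ∀ x y, nn (x + y) ≤ nn x + nn y)
    (hsmul : ∀ (c : ℝ) (x), nn (c • x) = |c| * nn x) (x : E) : 0 ≤ nn x := by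
  have h1 := hadd x ((-1 : ℝ) • x)
  rw [hsmul, neg_one_smul, add_neg_cancel, (h0 0).2 rfl] at h1
  norm_num at h1
  linarith

/-- A linear functional on a finite-dimensional real vector space is bounded with respect to any
norm, here given as a bare function satisfying the norm axioms. -/
lemma exists_bound_of_norm_like {E : Type*} [AddCommGroup E] [Module ℝ E] [FiniteDimensional ℝ E]
    {nn : E → ℝ}
    (h0 : ∀ x, nn x = 0 ↔ x = 0) (hadd : ∀ x y, nn (x + y) ≤ nn x + nn y)
    (hsmul : ∀ (c : ℝ) (x), nn (c • x) = |c| * nn x) (f : E →ₗ[ℝ] ℝ) :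
    ∃ C : ℝ, ∀ x, |f x| ≤ C * nn x := by
  let _ : Norm E := ⟨nn⟩
  have core : NormedSpace.Core ℝ E :=
    { norm_nonneg := norm_like_nonneg h0 hadd hsmul
      norm_smul := hsmul
      norm_triangle := hadd
      norm_eq_zero_iff := h0 }
  let _ : NormedAddCommGroup E := NormedAddCommGroup.ofCore core
  let _ : NormedSpace ℝ E := NormedSpace.ofCore core
  exact ⟨‖f.toContinuousLinearMap‖, fun x => f.toContinuousLinearMap.le_opNorm x⟩

section DualNorm

variable {J : Type*} [Fintype J] {nn : (J → ℝ) → ℝ}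

lemma bddAbove_dual (h0 : ∀ x, nn x = 0 ↔ x = 0) (hadd : ∀ x y, nn (x + y) ≤ nn x + nn y)
    (hsmul : ∀ (c : ℝ) (x), nn (c • x) = |c| * nn x) (w : J → ℝ) :
    BddAbove {r : ℝ | ∃ x, nn x ≤ 1 ∧ r = ∑ j, w j * x j} := by
  obtain ⟨C, hC⟩ := exists_bound_of_norm_like h0 hadd hsmul
    (∑ j, w j • (LinearMap.proj j : (J → ℝ) →ₗ[ℝ] ℝ))
  refine ⟨|C|, ?_⟩
  rintro r ⟨x, hx, rfl⟩
  have h1 := hC x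
  simp only [LinearMap.sum_apply, LinearMap.smul_apply, LinearMap.proj_apply, smul_eq_mul] at h1
  have h2 := norm_like_nonneg h0 hadd hsmul x
  calc _ ≤ _ := le_abs_self _
    _ ≤ _ := h1
    _ ≤ |C| * nn x := mul_le_mul_of_nonneg_right (le_abs_self C) h2
    _ ≤ |C| := mul_le_of_le_one_right (abs_nonneg _) hx

/-- Hölder's inequality for a norm and its dual norm. -/
lemma abs_pairing_le (h0 : ∀ x, nn x = 0 ↔ x = 0) (hadd : ∀ x y, nn (x + y) ≤ nn x + nn y)
    (hsmul : ∀ (c : ℝ) (x), nn (c • x) = |c| * nn x) (w x : J → ℝ) :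
    |∑ j, w j * x j| ≤ sSup {r : ℝ | ∃ x, nn x ≤ 1 ∧ r = ∑ j, w j * x j} * nn x := by
  rcases eq_or_ne x 0 with rfl | hx
  · simp [(h0 0).2 rfl]
  have hpos : 0 < nn x :=
    lt_of_le_of_ne (norm_like_nonneg h0 hadd hsmul x) fun h => hx ((h0 x).1 h.symm)
  have key : ∀ c : ℝ, |c| = (nn x)⁻¹ → c * ∑ j, w j * x j ≤
      sSup {r : ℝ | ∃ x, nn x ≤ 1 ∧ r = ∑ j, w j * x j} := by
    intro c hc
    refine le_csSup (bddAbove_dual h0 hadd hsmul w) ⟨c • x, ?_, ?_⟩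
    · rw [hsmul, hc, inv_mul_cancel₀ hpos.ne']
    · rw [Finset.mul_sum]
      exact Finset.sum_congr rfl fun j _ => by simp only [Pi.smul_apply, smul_eq_mul]; ring
  rw [← div_le_iff₀ hpos, div_eq_inv_mul]
  rcases abs_cases (∑ j, w j * x j) with ⟨h, _⟩ | ⟨h, _⟩ <;> rw [h]
  · exact key _ (abs_of_pos (inv_pos.2 hpos))
  · rw [mul_neg, ← neg_mul]
    exact key _ (by rw [abs_neg, abs_of_pos (inv_pos.2 hpos)])

end DualNorm

/-! ### The loss functions -/

/-- All that is used about the four losses: they are nonnegative, `1`-Lipschitz, of slope at least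
one at `+∞`, and wherever positive they grow with slope exactly one along one of the two
half-lines. -/
lemma loss_props {τ : ℝ} {h : ℝ → ℝ}
    (hh : (∀ t, h t = |t|) ∨ (∀ t, h t = max 0 t) ∨
          (∀ t, h t = |t - τ|) ∨ (∀ t, h t = max 0 (t - τ))) :
    (∀ t, 0 ≤ h t) ∧ (∀ s t, h s ≤ h t + |s - t|) ∧ (∃ κ, ∀ t, t - κ ≤ h t) ∧
      ∀ t, ∃ σ : ℝ, |σ| = 1 ∧ (0 < h t → ∀ a, 0 ≤ a → h (t + σ * a) = h t + a) := by
  obtain ⟨κ, hκ⟩ : ∃ κ, (∀ t, h t = |t - κ|) ∨ (∀ t, h t = max 0 (t - κ)) := by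
    rcases hh with h1 | h1 | h1 | h1
    · exact ⟨0, Or.inl fun t => by simp [h1]⟩
    · exact ⟨0, Or.inr fun t => by simp [h1]⟩
    · exact ⟨τ, Or.inl h1⟩
    · exact ⟨τ, Or.inr h1⟩
  rcases hκ with h1 | h1
  · refine ⟨fun t => by simp [h1], fun s t => ?_, ⟨κ, fun t => by simp [h1, le_abs_self]⟩,
      fun t => ?_⟩
    · rw [h1, h1]
      have := abs_add_le (t - κ) (s - t)
      rwa [show t - κ + (s - t) = s - κ by ring] at this
    · rcases le_total 0 (t - κ) with ht | ht
      · refine ⟨1, by simp, fun _ a ha => ?_⟩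
        rw [h1, h1, abs_of_nonneg ht, abs_of_nonneg (by linarith)]; ring
      · refine ⟨-1, by simp, fun _ a ha => ?_⟩
        rw [h1, h1, abs_of_nonpos ht, abs_of_nonpos (by linarith)]; ring
  · refine ⟨fun t => by simp [h1], fun s t => ?_, ⟨κ, fun t => by simp [h1]⟩, fun t => ?_⟩
    · rw [h1, h1]
      have h2 := le_abs_self (s - t)
      have h3 := abs_nonneg (s - t)
      have h4 := le_max_left 0 (t - κ)
      have h5 := le_max_right 0 (t - κ)
      exact max_le (by linarith) (by linarith)
    · refine ⟨1, by simp, fun hp a ha => ?_⟩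
      rw [h1] at hp
      have h2 : 0 < t - κ := by simpa using hp
      rw [h1, h1, max_eq_right h2.le, max_eq_right (by linarith)]; ring

/-! ### Transport cost: Minkowski's inequality and discrete measures -/

/-- Minkowski's inequality along couplings: if `F` increases by at most `g ≤ C * c` between two
points, then its `L^p` norm under `Q` exceeds the one under `P` by at most `C` times the
transport cost.
Routing the estimate through the measurable function `g` means that `c` need not be measurable. -/
lemma lp_le_add_transportCost {Z : Type*} [MeasurableSpace Z] {c : Z → Z → ℝ≥0∞} {p : ℝ}
    (hp : 1 ≤ p) {P Q : Measure Z} {F : Z → ℝ≥0∞} (hF : Measurable F) {g : Z × Z → ℝ≥0∞}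
    (hg : Measurable g) {C : ℝ≥0∞} (hC0 : C ≠ 0) (hC : C ≠ ⊤)
    (hFg : ∀ z, F z.1 ≤ F z.2 + g z) (hgc : ∀ z, g z ≤ C * c z.1 z.2) :
    (∫⁻ z, F z ^ p ∂Q) ^ (1 / p) ≤ (∫⁻ z, F z ^ p ∂P) ^ (1 / p) + C * transportCost c p Q P := by
  have hp0 : 0 < p := by linarith
  rw [← tsub_le_iff_left, ← ENNReal.div_le_iff' hC0 hC, transportCost, one_div p,
    ENNReal.le_rpow_inv_iff hp0]
  refine le_iInf₂ fun π hπ => ?_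
  obtain ⟨-, h1, h2⟩ := hπ
  rw [← ENNReal.le_rpow_inv_iff hp0, ENNReal.div_le_iff' hC0 hC, tsub_le_iff_left]
  have e1 : ∫⁻ z, F z ^ p ∂Q = ∫⁻ z, F z.1 ^ p ∂π := by
    rw [← h1, lintegral_map (hF.pow_const p) measurable_fst]
  have e2 : ∫⁻ z, F z ^ p ∂P = ∫⁻ z, F z.2 ^ p ∂π := by
    rw [← h2, lintegral_map (hF.pow_const p) measurable_snd]
  rw [e1, e2, ← one_div]
  calc (∫⁻ z, F z.1 ^ p ∂π) ^ (1 / p)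
      ≤ (∫⁻ z, ((fun z : Z × Z => F z.2) + g) z ^ p ∂π) ^ (1 / p) := by
        gcongr with z
        exact hFg z
    _ ≤ (∫⁻ z, F z.2 ^ p ∂π) ^ (1 / p) + (∫⁻ z, g z ^ p ∂π) ^ (1 / p) :=
        ENNReal.lintegral_Lp_add_le (hF.comp measurable_snd).aemeasurable hg.aemeasurable hp
    _ ≤ (∫⁻ z, F z.2 ^ p ∂π) ^ (1 / p) + (∫⁻ z, (C * c z.1 z.2) ^ p ∂π) ^ (1 / p) := by
        gcongr with z
        exact hgc z
    _ = _ := by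
        simp_rw [ENNReal.mul_rpow_of_nonneg _ _ hp0.le]
        rw [lintegral_const_mul' _ _ (ENNReal.rpow_ne_top_of_nonneg hp0.le hC),
          ENNReal.mul_rpow_of_nonneg _ _ (by positivity), ← ENNReal.rpow_mul,
          mul_one_div_cancel hp0.ne', ENNReal.rpow_one]

/-- The pairing of atoms of equal weight bounds the transport cost of discrete measures. -/
lemma transportCost_sum_dirac_le {Z ι : Type*} [MeasurableSpace Z] [MeasurableSingletonClass Z]
    [Fintype ι] (c : Z → Z → ℝ≥0∞) {p : ℝ} (hp : 1 ≤ p) (q : ι → ℝ≥0∞) (hq : ∑ i, q i = 1)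
    (a b : ι → Z) :
    transportCost c p (∑ i, q i • Measure.dirac (a i)) (∑ i, q i • Measure.dirac (b i)) ≤
      (∑ i, q i * c (a i) (b i) ^ p) ^ (1 / p) := by
  rw [transportCost]
  gcongr
  refine (iInf₂_le (∑ i, q i • Measure.dirac (a i, b i)) ⟨⟨?_⟩, ?_, ?_⟩).trans ?_
  · rw [lintegral_finsetSum_measure]
    simp
  · simp [hq]
  · rw [Measure.map_finset_sum measurable_fst.aemeasurable]
    simp [Measure.map_smul, Measure.map_dirac' measurable_fst]
  · rw [Measure.map_finset_sum measurable_snd.aemeasurable]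
    simp [Measure.map_smul, Measure.map_dirac' measurable_snd]

/-! ### Optimal displacement of the residuals -/

/-- The one-dimensional optimization behind the lower bound. A point of the set of risks is
available for every displacement profile `a` of an `ε`-fraction of each atom within the transport
budget, where `d` is the change of residual per unit of displacement. If the empirical risk is
positive, displacements proportional to the losses give equality in Minkowski's inequality; if it
vanishes, a vanishing fraction `ε` of the mass is moved by the distance `δ / ε ^ (1 / p)`. -/
lemma le_sSup_of_mem {N : ℕ} (hN : 0 < N) {p δ d : ℝ} (hp : 1 ≤ p) (hδ : 0 < δ) (hd : 0 ≤ d)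
    {h : ℝ → ℝ} {t : Fin N → ℝ} (hnn : ∀ t, 0 ≤ h t) (hκ : ∃ κ, ∀ t, t - κ ≤ h t)
    (hσ : ∀ t, ∃ σ : ℝ, |σ| = 1 ∧ (0 < h t → ∀ a, 0 ≤ a → h (t + σ * a) = h t + a))
    {S : Set ℝ} (hS : BddAbove S)
    (hmem : ∀ (ε : ℝ) (a : Fin N → ℝ), 0 ≤ ε → ε ≤ 1 →
      (N : ℝ)⁻¹ * ∑ i, ε * |a i| ^ p ≤ δ ^ p →
      (N : ℝ)⁻¹ * ∑ i, ((1 - ε) * h (t i) ^ p + ε * h (t i + a i * d) ^ p) ∈ S) :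
    ((N : ℝ)⁻¹ * ∑ i, h (t i) ^ p) ^ (1 / p) + δ * d ≤ (sSup S) ^ (1 / p) := by
  have hp0 : 0 < p := by linarith
  have hN0 : (0 : ℝ) < N := by exact_mod_cast hN
  set R := (N : ℝ)⁻¹ * ∑ i, h (t i) ^ p with hR
  have hterm : ∀ s, 0 ≤ h s ^ p := fun s => Real.rpow_nonneg (hnn s) _
  have hR0 : 0 ≤ R := mul_nonneg (by positivity) (Finset.sum_nonneg fun i _ => hterm _)
  have hRS : R ∈ S := by
    have := hmem 0 0 le_rfl zero_le_one (by simpa using by positivity)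
    simpa using this
  have hS0 : 0 ≤ sSup S := hR0.trans (le_csSup hS hRS)
  have hE0 : 0 ≤ R ^ (1 / p) := Real.rpow_nonneg hR0 _
  have hEp : (R ^ (1 / p)) ^ p = R := by
    rw [← Real.rpow_mul hR0, one_div_mul_cancel hp0.ne', Real.rpow_one]
  -- a lower bound for `sSup S ^ (1 / p)` follows from the `p`-th power inequality
  have root : ∀ x r : ℝ, 0 ≤ x → r ∈ S → x ^ p ≤ r → x ≤ sSup S ^ (1 / p) := by
    intro x r hx hr hxr
    rw [one_div, Real.le_rpow_inv_iff_of_pos hx hS0 hp0]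
    exact hxr.trans (le_csSup hS hr)
  rcases hE0.eq_or_lt with hE | hE
  · obtain ⟨κ, hκ⟩ := hκ
    have hR00 : R = 0 := by rw [← hEp, ← hE, Real.zero_rpow hp0.ne']
    have hz : ∀ i, h (t i) ^ p = 0 := by
      have h1 : ∑ i, h (t i) ^ p = 0 := by
        rcases mul_eq_zero.1 hR00 with h2 | h2
        · exact absurd h2 (by positivity)
        · exact h2
      intro i
      exact (Finset.sum_eq_zero_iff_of_nonneg fun i _ => hterm _).1 h1 i (Finset.mem_univ i)
    obtain ⟨K, hK⟩ : ∃ K, ∀ i, κ - t i ≤ K := by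
      obtain ⟨K, hK⟩ := (Set.finite_range fun i => κ - t i).bddAbove
      exact ⟨K, fun i => hK ⟨i, rfl⟩⟩
    have claim : ∀ η : ℝ, 0 < η → η ≤ 1 → δ * d - η * K ≤ sSup S ^ (1 / p) := by
      intro η hη hη1
      have hηp : 0 < η ^ p := Real.rpow_pos_of_pos hη p
      have hm := hmem (η ^ p) (fun _ => δ / η) hηp.le (Real.rpow_le_one hη.le hη1 hp0.le) (by
        rw [← Finset.mul_sum, Finset.sum_const, Finset.card_univ, Fintype.card_fin, nsmul_eq_mul,
          abs_of_pos (div_pos hδ hη), Real.div_rpow hδ.le hη.le]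
        apply le_of_eq
        field_simp)
      rcases le_total (δ * d - η * K) 0 with h0 | h0
      · exact h0.trans (Real.rpow_nonneg hS0 _)
      refine root _ _ h0 hm ?_
      calc (δ * d - η * K) ^ p = (N : ℝ)⁻¹ * ∑ i : Fin N, (δ * d - η * K) ^ p := by
            rw [Finset.sum_const, Finset.card_univ, Fintype.card_fin, nsmul_eq_mul]
            field_simp
        _ ≤ _ := by
            gcongr with i
            rw [hz i, mul_zero, zero_add, ← Real.mul_rpow hη.le (hnn _)]
            refine Real.rpow_le_rpow h0 ?_ hp0.le
            have h1 := hκ (t i + δ / η * d)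
            have h2 := hK i
            calc δ * d - η * K = η * (δ / η * d - K) := by field_simp
              _ ≤ _ := by
                gcongr
                linarith
    rw [← hE, zero_add]
    refine le_of_forall_pos_le_add fun ε hε => ?_
    have hK1 : 0 < |K| + 1 := by positivity
    have hη : 0 < min 1 (ε / (|K| + 1)) := lt_min one_pos (div_pos hε hK1)
    have h1 := claim _ hη (min_le_left _ _)
    have h2 : min 1 (ε / (|K| + 1)) * K ≤ ε := by
      calc _ ≤ min 1 (ε / (|K| + 1)) * (|K| + 1) := by
            gcongr
            linarith [le_abs_self K]
        _ ≤ ε / (|K| + 1) * (|K| + 1) := by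
            gcongr
            exact min_le_right _ _
        _ = ε := by field_simp
    linarith
  · choose σ hσ1 hσ using hσ
    set e := R ^ (1 / p) with he
    have hl : 0 < δ / e := div_pos hδ hE
    have hm := hmem 1 (fun i => σ (t i) * (δ / e * h (t i))) zero_le_one le_rfl (by
      apply le_of_eq
      simp only [abs_mul, hσ1, one_mul, abs_of_nonneg (hnn _), abs_of_pos hl,
        Real.mul_rpow hl.le (hnn _)]
      rw [← Finset.mul_sum, mul_left_comm, ← hR, ← hEp, Real.div_rpow hδ.le hE.le]
      have : e ^ p ≠ 0 := (Real.rpow_pos_of_pos hE p).ne'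
      field_simp)
    refine root _ _ (by positivity) hm (le_of_eq ?_)
    have h1 : ∀ i, (1 - 1) * h (t i) ^ p + 1 * h (t i + σ (t i) * (δ / e * h (t i)) * d) ^ p =
        (1 + δ / e * d) ^ p * h (t i) ^ p := by
      intro i
      rw [← Real.mul_rpow (by positivity) (hnn _)]
      rcases (hnn (t i)).eq_or_lt with h0 | h0
      · rw [← h0]; simp [← h0]
      · rw [mul_assoc (σ (t i)), hσ _ h0 _ (by positivity)]
        ring_nf
    simp_rw [h1]
    rw [← Finset.mul_sum, mul_left_comm, ← hR, ← hEp, ← Real.mul_rpow (by positivity) hE.le]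
    congr 1
    field_simp

lemma nonneg_dual {J : Type*} [Fintype J] {nn : (J → ℝ) → ℝ} (h0 : ∀ x, nn x = 0 ↔ x = 0)
    (hadd : ∀ x y, nn (x + y) ≤ nn x + nn y)
    (hsmul : ∀ (c : ℝ) (x), nn (c • x) = |c| * nn x) (w : J → ℝ) :
    0 ≤ sSup {r : ℝ | ∃ x, nn x ≤ 1 ∧ r = ∑ j, w j * x j} :=
  le_csSup (bddAbove_dual h0 hadd hsmul w) ⟨0, by simp [(h0 0).2 rfl], by simp⟩

/-! ### The two bounds for the causally fair cost -/

lemma sum_compl_eq {n : ℕ} {I : Finset (Fin n)} {f : Fin n → ℝ} (hf : ∀ i ∈ I, f i = 0) :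
    ∑ j, f j = ∑ j : {i // i ∈ Iᶜ}, f j := by
  rw [← Finset.sum_add_sum_compl I, Finset.sum_eq_zero hf, zero_add]
  exact (Finset.sum_coe_sort Iᶜ f).symm

/-- As `Mᵀθ` vanishes on the sensitive coordinates, `⟨θ, u⟩ = ⟨Mᵀθ, M⁻¹u⟩` only involves the
remaining coordinates of `M⁻¹u`. -/
lemma pairing_eq {n : ℕ} {M : Matrix (Fin n) (Fin n) ℝ} (hM : IsUnit M.det) {I : Finset (Fin n)}
    {θ : Fin n → ℝ} (hθ : ∀ i : {i // i ∈ I}, Mᵀ.mulVec θ i = 0) (u : Fin n → ℝ) :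
    ∑ j, θ j * u j = ∑ j : {i // i ∈ Iᶜ}, Mᵀ.mulVec θ j * M⁻¹.mulVec u j := by
  rw [← sum_compl_eq (I := I) (f := fun j => Mᵀ.mulVec θ j * M⁻¹.mulVec u j)
    fun i hi => by rw [hθ ⟨i, hi⟩, zero_mul]]
  have h1 : θ ⬝ᵥ u = Mᵀ.mulVec θ ⬝ᵥ M⁻¹.mulVec u := by
    rw [Matrix.mulVec_transpose, ← Matrix.dotProduct_mulVec, Matrix.mulVec_mulVec,
      Matrix.mul_nonsing_inv _ hM, Matrix.one_mulVec]
  exact h1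

lemma lintegral_empirical {Z : Type*} [MeasurableSpace Z] [MeasurableSingletonClass Z] {N : ℕ}
    (hN : 0 < N) (z : Fin N → Z) {f : Z → ℝ} (hf : ∀ z, 0 ≤ f z) {p : ℝ} (hp : 0 ≤ p) :
    ∫⁻ x, ENNReal.ofReal (f x) ^ p ∂((N : ℝ≥0∞)⁻¹ • ∑ i, Measure.dirac (z i)) =
      ENNReal.ofReal ((N : ℝ)⁻¹ * ∑ i, f (z i) ^ p) := by
  rw [lintegral_smul_measure, lintegral_finsetSum_measure]
  simp only [lintegral_dirac, smul_eq_mul]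
  have hN0 : (0 : ℝ) < N := by exact_mod_cast hN
  rw [ENNReal.ofReal_mul (by positivity), ENNReal.ofReal_inv_of_pos hN0, ENNReal.ofReal_natCast,
    ENNReal.ofReal_sum_of_nonneg fun i _ => Real.rpow_nonneg (hf _) _]
  simp_rw [ENNReal.ofReal_rpow_of_nonneg (hf _) hp]

section Main

variable {n N : ℕ} {M : Matrix (Fin n) (Fin n) ℝ} {I : Finset (Fin n)}
  {nn : ({i // i ∈ Iᶜ} → ℝ) → ℝ} {p δ : ℝ} {θ : Fin n → ℝ} {h : ℝ → ℝ}

/-- The causally fair cost, which ignores the coordinates of `M⁻¹v` in `I` and forbids changes of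
the label. -/
noncomputable abbrev fairCost (M : Matrix (Fin n) (Fin n) ℝ) (nn : ({i // i ∈ Iᶜ} → ℝ) → ℝ) :
    (Fin n → ℝ) × ℝ → (Fin n → ℝ) × ℝ → ℝ≥0∞ :=
  fun z z' => if z.2 = z'.2 then
    ENNReal.ofReal (nn (fun j => M⁻¹.mulVec z.1 j - M⁻¹.mulVec z'.1 j)) else ⊤

lemma upper_bound (hN : 0 < N) (hM : IsUnit M.det)
    (hnn0 : ∀ x, nn x = 0 ↔ x = 0) (hnnadd : ∀ x y, nn (x + y) ≤ nn x + nn y)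
    (hnnsmul : ∀ (c : ℝ) (x), nn (c • x) = |c| * nn x) (hp : 1 ≤ p) (hδ : 0 < δ)
    (v : Fin N → (Fin n → ℝ)) (y : Fin N → ℝ)
    (hθ : ∀ i : {i // i ∈ I}, Mᵀ.mulVec θ i = 0)
    (h0 : ∀ t, 0 ≤ h t) (hlip : ∀ s t, h s ≤ h t + |s - t|)
    {Q : Measure ((Fin n → ℝ) × ℝ)}
    (hQ : transportCost (fairCost M nn) p Q
      ((N : ℝ≥0∞)⁻¹ • ∑ i, Measure.dirac (v i, y i)) ≤ ENNReal.ofReal δ) :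
    ∫ z, h (z.2 - ∑ j, θ j * z.1 j) ^ p ∂Q ≤
      (((N : ℝ)⁻¹ * ∑ i, h (y i - ∑ j, θ j * v i j) ^ p) ^ (1 / p)
        + δ * sSup {r : ℝ | ∃ x, nn x ≤ 1 ∧
            r = ∑ j : {i // i ∈ Iᶜ}, Mᵀ.mulVec θ j * x j}) ^ p := by
  have hp0 : 0 < p := by linarith
  set D := sSup {r : ℝ | ∃ x, nn x ≤ 1 ∧ r = ∑ j : {i // i ∈ Iᶜ}, Mᵀ.mulVec θ j * x j} with hD
  have hD0 : 0 ≤ D := nonneg_dual hnn0 hnnadd hnnsmul _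
  set R := (N : ℝ)⁻¹ * ∑ i, h (y i - ∑ j, θ j * v i j) ^ p with hR
  have hR0 : 0 ≤ R :=
    mul_nonneg (by positivity) (Finset.sum_nonneg fun i _ => Real.rpow_nonneg (h0 _) _)
  have hcont : Continuous h :=
    (LipschitzWith.of_le_add fun s t => hlip s t).continuous
  set f : (Fin n → ℝ) × ℝ → ℝ := fun z => h (z.2 - ∑ j, θ j * z.1 j) with hf
  have hfcont : Continuous f := by fun_prop
  have hf0 : ∀ z, 0 ≤ f z := fun z => h0 _
  have hint : ∫ z, f z ^ p ∂Q = (∫⁻ z, ENNReal.ofReal (f z) ^ p ∂Q).toReal := by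
    rw [integral_eq_lintegral_of_nonneg_ae
      (Filter.Eventually.of_forall fun z => Real.rpow_nonneg (hf0 z) _)
      (hfcont.measurable.pow_const p).aestronglyMeasurable]
    simp_rw [ENNReal.ofReal_rpow_of_nonneg (hf0 _) hp0.le]
  have key : ∀ ε : ℝ, 0 < ε → (∫⁻ z, ENNReal.ofReal (f z) ^ p ∂Q) ^ (1 / p) ≤
      ENNReal.ofReal (R ^ (1 / p) + (D + ε) * δ) := by
    intro ε hε
    -- `C > 0` makes `C * ⊤ = ⊤`, so that couplings changing labels need no separate treatment
    have h1 := lp_le_add_transportCost (c := fairCost M nn) hp (Q := Q)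
      (P := (N : ℝ≥0∞)⁻¹ • ∑ i, Measure.dirac (v i, y i))
      (F := fun z => ENNReal.ofReal (f z)) hfcont.measurable.ennreal_ofReal
      (g := fun z => if z.1.2 = z.2.2 then
        ENNReal.ofReal |∑ j, θ j * z.1.1 j - ∑ j, θ j * z.2.1 j| else ⊤)
      (Measurable.ite (measurableSet_eq_fun (by fun_prop) (by fun_prop))
        (Continuous.measurable (ENNReal.continuous_ofReal.comp (by fun_prop))) measurable_const)
      (C := ENNReal.ofReal (D + ε)) (by simp; linarith) ENNReal.ofReal_ne_top
      (by
        intro z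
        by_cases hz : z.1.2 = z.2.2
        · simp only [hz, if_true]
          rw [← ENNReal.ofReal_add (hf0 _) (abs_nonneg _)]
          apply ENNReal.ofReal_le_ofReal
          refine (hlip _ (z.2.2 - ∑ j, θ j * z.2.1 j)).trans (le_of_eq ?_)
          rw [hz, abs_sub_comm (∑ j, θ j * z.1.1 j)]
          simp only [hf]
          congr 2
          ring
        · simp [hz])
      (by
        intro z
        by_cases hz : z.1.2 = z.2.2
        · simp only [fairCost, hz, if_true]
          rw [← ENNReal.ofReal_mul (by linarith)]
          apply ENNReal.ofReal_le_ofReal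
          rw [pairing_eq hM hθ, pairing_eq hM hθ, ← Finset.sum_sub_distrib]
          simp_rw [← mul_sub]
          refine (abs_pairing_le hnn0 hnnadd hnnsmul (fun j => Mᵀ.mulVec θ j)
            (fun j => M⁻¹.mulVec z.1.1 j - M⁻¹.mulVec z.2.1 j)).trans ?_
          exact mul_le_mul_of_nonneg_right (by linarith)
            (norm_like_nonneg hnn0 hnnadd hnnsmul _)
        · have : ENNReal.ofReal (D + ε) ≠ 0 := by simp; linarith
          simp [fairCost, hz, ENNReal.mul_top this])
    refine h1.trans ?_
    rw [lintegral_empirical hN _ hf0 hp0.le, ENNReal.ofReal_rpow_of_nonneg hR0 (by positivity),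
      ENNReal.ofReal_add (p := R ^ (1 / p)) (by positivity) (by positivity),
      ENNReal.ofReal_mul (p := D + ε) (by positivity)]
    gcongr
  have hx : (∫⁻ z, ENNReal.ofReal (f z) ^ p ∂Q) ^ (1 / p) ≤
      ENNReal.ofReal (R ^ (1 / p) + δ * D) := by
    have ht := ne_top_of_le_ne_top ENNReal.ofReal_ne_top (key 1 one_pos)
    rw [← ENNReal.ofReal_toReal ht]
    apply ENNReal.ofReal_le_ofReal
    refine le_of_forall_pos_le_add fun ε hε => ?_
    refine (ENNReal.toReal_le_of_le_ofReal (by positivity)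
      (key (ε / δ) (div_pos hε hδ))).trans (le_of_eq ?_)
    field_simp
    ring
  change ∫ z, f z ^ p ∂Q ≤ _
  rw [hint]
  refine ENNReal.toReal_le_of_le_ofReal (by positivity) ?_
  rw [one_div, ENNReal.rpow_inv_le_iff hp0,
    ENNReal.ofReal_rpow_of_nonneg (by positivity) hp0.le] at hx
  simpa using hx

/-- Displacing an `ε`-fraction of each atom `v i` by `-a i • M x`, where `x` is extended by zero to the
sensitive coordinates, shifts its residual by `a i * ⟨Mᵀθ, x⟩` and costs at most `|a i|` per unit
of mass. -/
lemma exists_measure (hN : 0 < N) (hM : IsUnit M.det)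
    (hnn0 : ∀ x, nn x = 0 ↔ x = 0)
    (hnnsmul : ∀ (c : ℝ) (x), nn (c • x) = |c| * nn x) (hp : 1 ≤ p) (hδ : 0 < δ)
    (v : Fin N → (Fin n → ℝ)) (y : Fin N → ℝ)
    (hθ : ∀ i : {i // i ∈ I}, Mᵀ.mulVec θ i = 0) (h : ℝ → ℝ)
    {x : {i // i ∈ Iᶜ} → ℝ} (hx : nn x ≤ 1) {ε : ℝ} (hε0 : 0 ≤ ε) (hε1 : ε ≤ 1)
    (a : Fin N → ℝ) (ha : (N : ℝ)⁻¹ * ∑ i, ε * |a i| ^ p ≤ δ ^ p) :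
    ∃ Q : Measure ((Fin n → ℝ) × ℝ), IsProbabilityMeasure Q ∧
      transportCost (fairCost M nn) p Q
        ((N : ℝ≥0∞)⁻¹ • ∑ i, Measure.dirac (v i, y i)) ≤ ENNReal.ofReal δ ∧
      (N : ℝ)⁻¹ * ∑ i, ((1 - ε) * h (y i - ∑ j, θ j * v i j) ^ p +
        ε * h (y i - ∑ j, θ j * v i j + a i * ∑ j : {i // i ∈ Iᶜ}, Mᵀ.mulVec θ j * x j) ^ p) =
        ∫ z, h (z.2 - ∑ j, θ j * z.1 j) ^ p ∂Q := by
  have hp0 : 0 < p := by linarith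
  have hN0 : (0 : ℝ) < N := by exact_mod_cast hN
  set e : Fin n → ℝ := fun j => if hj : j ∈ Iᶜ then x ⟨j, hj⟩ else 0 with he
  have hMe : ∀ b : ℝ, M⁻¹.mulVec (M.mulVec (b • e)) = b • e := fun b => by
    rw [Matrix.mulVec_mulVec, Matrix.nonsing_inv_mul _ hM, Matrix.one_mulVec]
  set v' : Fin N → Fin n → ℝ := fun i => v i - M.mulVec (a i • e) with hv'
  have hres : ∀ i, ∑ j, θ j * v' i j =
      ∑ j, θ j * v i j - a i * ∑ j : {i // i ∈ Iᶜ}, Mᵀ.mulVec θ j * x j := by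
    intro i
    simp only [hv', Pi.sub_apply, mul_sub, Finset.sum_sub_distrib]
    rw [pairing_eq hM hθ (M.mulVec (a i • e)), hMe, Finset.mul_sum]
    congr 1
    refine Finset.sum_congr rfl fun j _ => ?_
    have : e j = x j := by simp only [he]; rw [dif_pos j.2]
    rw [Pi.smul_apply, this, smul_eq_mul]
    ring
  -- weight `(1 - ε) / N` on the original atoms, and `ε / N` on the displaced ones
  set q : Fin N ⊕ Fin N → ℝ≥0∞ := Sum.elim (fun _ => ENNReal.ofReal ((N : ℝ)⁻¹ * (1 - ε)))
    (fun _ => ENNReal.ofReal ((N : ℝ)⁻¹ * ε)) with hq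
  have hε' : 0 ≤ (N : ℝ)⁻¹ * (1 - ε) := mul_nonneg (by positivity) (by linarith)
  have hε'' : 0 ≤ (N : ℝ)⁻¹ * ε := by positivity
  have hqadd : ENNReal.ofReal ((N : ℝ)⁻¹ * (1 - ε)) + ENNReal.ofReal ((N : ℝ)⁻¹ * ε) =
      (N : ℝ≥0∞)⁻¹ := by
    rw [← ENNReal.ofReal_add hε' hε'', ← mul_add, sub_add_cancel, mul_one,
      ENNReal.ofReal_inv_of_pos hN0, ENNReal.ofReal_natCast]
  have hq1 : ∑ k, q k = 1 := by
    rw [Fintype.sum_sum_type, ← Finset.sum_add_distrib]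
    simp only [hq, Sum.elim_inl, Sum.elim_inr, hqadd, Finset.sum_const, Finset.card_univ,
      Fintype.card_fin, nsmul_eq_mul]
    exact ENNReal.mul_inv_cancel (by exact_mod_cast hN.ne') (ENNReal.natCast_ne_top N)
  set A : Fin N ⊕ Fin N → (Fin n → ℝ) × ℝ :=
    Sum.elim (fun i => (v i, y i)) (fun i => (v' i, y i)) with hA
  set B : Fin N ⊕ Fin N → (Fin n → ℝ) × ℝ :=
    Sum.elim (fun i => (v i, y i)) (fun i => (v i, y i)) with hB
  have hP : (N : ℝ≥0∞)⁻¹ • ∑ i, Measure.dirac (v i, y i) =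
      ∑ k, q k • Measure.dirac (B k) := by
    rw [Fintype.sum_sum_type, ← Finset.sum_add_distrib, Finset.smul_sum]
    simp only [hq, hB, Sum.elim_inl, Sum.elim_inr, ← add_smul, hqadd]
  refine ⟨∑ k, q k • Measure.dirac (A k), ⟨?_⟩, ?_, ?_⟩
  · rw [← hq1]
    simp [-Fintype.sum_sum_type]
  · rw [hP]
    refine (transportCost_sum_dirac_le _ hp q hq1 A B).trans ?_
    rw [one_div, ENNReal.rpow_inv_le_iff hp0, ENNReal.ofReal_rpow_of_nonneg hδ.le hp0.le,
      Fintype.sum_sum_type]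
    have c1 : ∀ i, fairCost M nn (A (Sum.inl i)) (B (Sum.inl i)) = 0 := by
      intro i
      have : nn (fun _ => 0) = 0 := (hnn0 _).2 rfl
      simp [fairCost, hA, hB, this]
    have c2 : ∀ i, fairCost M nn (A (Sum.inr i)) (B (Sum.inr i)) ≤ ENNReal.ofReal |a i| := by
      intro i
      simp only [fairCost, hA, hB, Sum.elim_inr, if_true]
      apply ENNReal.ofReal_le_ofReal
      have : (fun j : {i // i ∈ Iᶜ} => M⁻¹.mulVec (v' i) j - M⁻¹.mulVec (v i) j) =
          (-a i) • x := by
        funext j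
        have hj : e j = x j := by simp only [he]; rw [dif_pos j.2]
        simp only [hv', Matrix.mulVec_sub, hMe]
        simp [hj]
      rw [this, hnnsmul, abs_neg]
      exact mul_le_of_le_one_right (abs_nonneg _) hx
    have hz : ∑ i, q (Sum.inl i) * fairCost M nn (A (Sum.inl i)) (B (Sum.inl i)) ^ p = 0 :=
      Finset.sum_eq_zero fun i _ => by rw [c1, ENNReal.zero_rpow_of_pos hp0, mul_zero]
    rw [hz, zero_add]
    calc _ ≤ ∑ i, ENNReal.ofReal ((N : ℝ)⁻¹ * (ε * |a i| ^ p)) := by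
          refine Finset.sum_le_sum fun i _ => ?_
          rw [← mul_assoc, ENNReal.ofReal_mul hε'',
            ← ENNReal.ofReal_rpow_of_nonneg (abs_nonneg _) hp0.le]
          simp only [hq, Sum.elim_inr]
          gcongr
          exact c2 i
      _ = ENNReal.ofReal ((N : ℝ)⁻¹ * ∑ i, ε * |a i| ^ p) := by
          rw [Finset.mul_sum, ENNReal.ofReal_sum_of_nonneg]
          exact fun i _ => by positivity
      _ ≤ _ := ENNReal.ofReal_le_ofReal ha
  · have hqt : ∀ k, q k ≠ ⊤ := by
      rintro (k | k) <;> exact ENNReal.ofReal_ne_top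
    rw [integral_finsetSum_measure fun k _ =>
      (integrable_dirac (by simp)).smul_measure (hqt k), Fintype.sum_sum_type,
      ← Finset.sum_add_distrib, Finset.mul_sum]
    refine Finset.sum_congr rfl fun i _ => ?_
    simp only [integral_smul_measure, integral_dirac, hq, hA, Sum.elim_inl, Sum.elim_inr, hres,
      ENNReal.toReal_ofReal hε', ENNReal.toReal_ofReal hε'', smul_eq_mul]
    rw [sub_sub_eq_add_sub, add_sub_right_comm]
    ring

end Main

/-- Theorem 2 (Higher Order Linear Loss), case `diam(A) = ∞` (sensitive values range
over all of `ℝ^I`): under the constraint `P_A(Mᵀθ) = 0`, the worst-case risk over the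
Wasserstein ball with causally fair cost equals
`((empirical risk)^{1/p} + δ ‖P_X(Mᵀθ)‖_*)^p`. -/
theorem linear_loss_dro_regularizer_unbounded
    {n N : ℕ} (hN : 0 < N)
    (M : Matrix (Fin n) (Fin n) ℝ) (hM : IsUnit M.det)
    (I : Finset (Fin n))
    (nn : ({i // i ∈ Iᶜ} → ℝ) → ℝ)
    (hnn0 : ∀ x, nn x = 0 ↔ x = 0)
    (hnnadd : ∀ x y, nn (x + y) ≤ nn x + nn y)
    (hnnsmul : ∀ (c : ℝ) (x), nn (c • x) = |c| * nn x)
    (nnd : ({i // i ∈ Iᶜ} → ℝ) → ℝ)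
    (hnnd : ∀ w, nnd w = sSup {r : ℝ | ∃ x, nn x ≤ 1 ∧ r = ∑ j, w j * x j})
    {p : ℝ} (hp : 1 ≤ p) {δ : ℝ} (hδ : 0 < δ)
    (v : Fin N → (Fin n → ℝ)) (y : Fin N → ℝ) (θ : Fin n → ℝ)
    (hθ : ∀ i : {i // i ∈ I}, Mᵀ.mulVec θ i = 0)
    {τ : ℝ} (hτ : 0 ≤ τ) (h : ℝ → ℝ)
    (hh : (∀ t, h t = |t|) ∨ (∀ t, h t = max 0 t) ∨
          (∀ t, h t = |t - τ|) ∨ (∀ t, h t = max 0 (t - τ))) :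
    sSup {r : ℝ | ∃ Q : Measure ((Fin n → ℝ) × ℝ), IsProbabilityMeasure Q ∧
        transportCost
          (fun z z' => if z.2 = z'.2 then
              ENNReal.ofReal (nn (fun j => M⁻¹.mulVec z.1 j - M⁻¹.mulVec z'.1 j))
            else ⊤) p Q
          ((N : ℝ≥0∞)⁻¹ • ∑ i, Measure.dirac (v i, y i)) ≤ ENNReal.ofReal δ ∧
        r = ∫ z, h (z.2 - ∑ j, θ j * z.1 j) ^ p ∂Q} =
      (((N : ℝ)⁻¹ * ∑ i, h (y i - ∑ j, θ j * v i j) ^ p) ^ (1 / p)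
        + δ * nnd (fun j => Mᵀ.mulVec θ j)) ^ p := by
  have hp0 : 0 < p := by linarith
  obtain ⟨h0, hlip, hκ, hσ⟩ := loss_props hh
  set S := {r : ℝ | ∃ Q : Measure ((Fin n → ℝ) × ℝ), IsProbabilityMeasure Q ∧
        transportCost (fairCost M nn) p Q
          ((N : ℝ≥0∞)⁻¹ • ∑ i, Measure.dirac (v i, y i)) ≤ ENNReal.ofReal δ ∧
        r = ∫ z, h (z.2 - ∑ j, θ j * z.1 j) ^ p ∂Q} with hS
  change sSup S = _
  rw [hnnd]
  set D := sSup {r : ℝ | ∃ x, nn x ≤ 1 ∧ r = ∑ j : {i // i ∈ Iᶜ}, Mᵀ.mulVec θ j * x j} with hD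
  have hD0 : 0 ≤ D := nonneg_dual hnn0 hnnadd hnnsmul _
  set E := ((N : ℝ)⁻¹ * ∑ i, h (y i - ∑ j, θ j * v i j) ^ p) ^ (1 / p) with hE
  have hup : ∀ r ∈ S, r ≤ (E + δ * D) ^ p := by
    rintro r ⟨Q, -, hQ, rfl⟩
    exact upper_bound hN hM hnn0 hnnadd hnnsmul hp hδ v y hθ h0 hlip hQ
  have hbdd : BddAbove S := ⟨_, hup⟩
  have hlow : ∀ x, nn x ≤ 1 → 0 ≤ ∑ j : {i // i ∈ Iᶜ}, Mᵀ.mulVec θ j * x j →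
      E + δ * ∑ j : {i // i ∈ Iᶜ}, Mᵀ.mulVec θ j * x j ≤ sSup S ^ (1 / p) := by
    intro x hx hd
    refine le_sSup_of_mem hN hp hδ hd h0 hκ hσ hbdd fun ε a hε0 hε1 ha => ?_
    exact exists_measure hN hM hnn0 hnnsmul hp hδ v y hθ h hx hε0 hε1 a ha
  have hE0 : E ≤ sSup S ^ (1 / p) := by
    simpa using hlow 0 (by simp [(hnn0 0).2 rfl]) (by simp)
  have hEnn : 0 ≤ E := Real.rpow_nonneg
    (mul_nonneg (by positivity) (Finset.sum_nonneg fun i _ => Real.rpow_nonneg (h0 _) _)) _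
  have hDle : D ≤ (sSup S ^ (1 / p) - E) / δ := by
    refine csSup_le ⟨0, 0, by simp [(hnn0 0).2 rfl], by simp⟩ ?_
    rintro r ⟨x, hx, rfl⟩
    rw [le_div_iff₀ hδ]
    rcases le_total 0 (∑ j : {i // i ∈ Iᶜ}, Mᵀ.mulVec θ j * x j) with hd | hd
    · linarith [hlow x hx hd]
    · linarith [mul_nonpos_of_nonpos_of_nonneg hd hδ.le]
  have hne : S.Nonempty := by
    obtain ⟨Q, hQ, hQ', -⟩ := exists_measure hN hM hnn0 hnnsmul hp hδ v y hθ h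
      (x := 0) (by simp [(hnn0 0).2 rfl]) le_rfl zero_le_one (fun _ => 0)
      (by simpa using by positivity)
    exact ⟨_, Q, hQ, hQ', rfl⟩
  have hS0 : 0 ≤ sSup S := by
    refine Real.sSup_nonneg ?_
    rintro r ⟨Q, -, -, rfl⟩
    exact integral_nonneg fun z => Real.rpow_nonneg (h0 _) _
  apply le_antisymm (csSup_le hne hup)
  rw [le_div_iff₀ hδ] at hDle
  rw [← Real.le_rpow_inv_iff_of_pos (by positivity) hS0 hp0, ← one_div]
  linarith
end

section
/- Fix n, an invertible matrix M ∈ ℝ^{n×n}, a set I of coordinates with complement J, a norm ‖·‖ on ℝ^J, and a compact nonempty set A ⊆ ℝ^I. For v ∈ ℝⁿ and a ∈ A define the twin v̈_a := M · ι(a, P_X(M⁻¹ v)), where ι(a, x) ∈ ℝⁿ has I-coordinates a and J-coordinates x and P_X(u) denotes the J-coordinates of u. On Z = ℝⁿ × ℝ define the cost c((v, y), (v', y')) = ‖P_X(M⁻¹ v) − P_X(M⁻¹ v')‖ if y = y' and +∞ otherwise. Let ℓ : ℝⁿ × ℝ × Θ → ℝ be continuous in v. Then for any p ∈ [1, ∞),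 δ ≥ 0, θ ∈ Θ, and empirical measure P_N = (1/N) Σ_{i=1}^N δ_{(v_i, y_i)}: sup { ∫ ℓ(v, y, θ) dQ(v, y) : Q a probability measure on Z with W_{c,p}(Q, P_N) ≤ δ } ≥ (1/N) Σ_{i=1}^N sup_{a ∈ A} ℓ((v_i)̈_a, y_i, θ). -/
/-!
By compactness of `A` and continuity of the loss, each supremum over `A` is attained at some `aᵢ`.
The empirical measure `Q` of the points `((vᵢ)̈_{aᵢ}, yᵢ)` has risk equal to the counterfactual risk.
A twin has the same non-sensitive latent coordinates as the original point (`inv_mulVec_twin`), so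
the coupling of `Q` with the data that pairs the `i`-th atoms has zero cost. Hence `Q` lies in the
Wasserstein ball of every radius `δ ≥ 0`.
-/

open MeasureTheory ENNReal Matrix

/-- Recombine sensitive coordinates (indices in `I`) and non-sensitive coordinates
(indices in `Iᶜ`) into a vector of `ℝⁿ`. -/
noncomputable def recomb {n : ℕ} (I : Finset (Fin n))
    (a : {i // i ∈ I} → ℝ) (x : {i // i ∈ Iᶜ} → ℝ) : Fin n → ℝ :=
  fun i => if h : i ∈ I then a ⟨i, h⟩ else x ⟨i, Finset.mem_compl.mpr h⟩

/-- The twin `v̈_a` of `v` under the hard intervention setting the sensitive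
(semi-latent) coordinates to `a`, for a linear SCM with reduced-form matrix `M`. -/
noncomputable def twin {n : ℕ} (M : Matrix (Fin n) (Fin n) ℝ) (I : Finset (Fin n))
    (v : Fin n → ℝ) (a : {i // i ∈ I} → ℝ) : Fin n → ℝ :=
  M.mulVec (recomb I a (fun j => M⁻¹.mulVec v j))

/-- The uniform probability measure on a finite nonempty family of points (with multiplicity). -/
noncomputable def empirical {Z : Type*} [MeasurableSpace Z] {N : ℕ} (z : Fin N → Z) : Measure Z :=
  (N : ℝ≥0∞)⁻¹ • ∑ i, Measure.dirac (z i)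

lemma isProbabilityMeasure_empirical {Z : Type*} [MeasurableSpace Z] {N : ℕ} (hN : 0 < N)
    (z : Fin N → Z) : IsProbabilityMeasure (empirical z) := by
  constructor
  have h0 : (N : ℝ≥0∞) ≠ 0 := by exact_mod_cast hN.ne'
  simp [empirical, ENNReal.inv_mul_cancel h0 (ENNReal.natCast_ne_top N)]

lemma map_empirical {Z W : Type*} [MeasurableSpace Z] [MeasurableSpace W] {N : ℕ}
    (z : Fin N → Z) {f : Z → W} (hf : Measurable f) :
    (empirical z).map f = empirical (fun i => f (z i)) := by
  simp only [empirical, Measure.map_smul]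
  rw [← Measure.mapₗ_apply_of_measurable hf, map_sum]
  simp [Measure.mapₗ_apply_of_measurable hf, Measure.map_dirac' hf]

lemma integral_empirical {Z : Type*} [MeasurableSpace Z] [MeasurableSingletonClass Z] {N : ℕ}
    (z : Fin N → Z) (f : Z → ℝ) :
    ∫ x, f x ∂(empirical z) = (N : ℝ)⁻¹ * ∑ i, f (z i) := by
  rw [empirical, integral_smul_measure, integral_finsetSum_measure]
  · simp
  · intro i _
    exact integrable_dirac (by simp)

/-- Two empirical measures whose atoms are paired at zero cost are at transport cost zero. -/
lemma transportCost_empirical_eq_zero {Z : Type*} [MeasurableSpace Z] [MeasurableSingletonClass Z]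
    {N : ℕ} (hN : 0 < N) (c : Z → Z → ℝ≥0∞) {p : ℝ} (hp : 0 < p) (z w : Fin N → Z)
    (h : ∀ i, c (z i) (w i) = 0) :
    transportCost c p (empirical z) (empirical w) = 0 := by
  have hinf : (⨅ π ∈ {π : Measure (Z × Z) | IsProbabilityMeasure π ∧
      π.map Prod.fst = empirical z ∧ π.map Prod.snd = empirical w},
      ∫⁻ x, c x.1 x.2 ^ p ∂π) = 0 := by
    refine le_antisymm (iInf₂_le_of_le (empirical fun i => (z i, w i))
      ⟨isProbabilityMeasure_empirical hN _, map_empirical _ measurable_fst,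
        map_empirical _ measurable_snd⟩ ?_) bot_le
    rw [empirical, lintegral_smul_measure, lintegral_finsetSum_measure]
    simp [h, ENNReal.zero_rpow_of_pos hp]
  rw [transportCost, hinf]
  exact ENNReal.zero_rpow_of_pos (by positivity)

lemma inv_mulVec_twin {n : ℕ} {M : Matrix (Fin n) (Fin n) ℝ} (hM : IsUnit M.det)
    (I : Finset (Fin n)) (v : Fin n → ℝ) (a : {i // i ∈ I} → ℝ) (j : {i // i ∈ Iᶜ}) :
    M⁻¹.mulVec (twin M I v a) j = M⁻¹.mulVec v j := by
  have hj : (j : Fin n) ∉ I := Finset.mem_compl.mp j.2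
  rw [twin, Matrix.mulVec_mulVec, Matrix.nonsing_inv_mul _ hM, Matrix.one_mulVec]
  simp [recomb, hj]

lemma continuous_twin {n : ℕ} (M : Matrix (Fin n) (Fin n) ℝ)
    (I : Finset (Fin n)) (v : Fin n → ℝ) : Continuous (twin M I v) := by
  refine Continuous.matrix_mulVec continuous_const (continuous_pi fun i => ?_)
  by_cases h : i ∈ I
  · simpa [recomb, h] using continuous_apply _
  · simpa [recomb, h] using continuous_const

/-- The DRO worst-case risk dominates the counterfactual risk: since twins have zero
causally fair cost, the supremum of `∫ ℓ dQ` over the Wasserstein ball of any radius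
`δ ≥ 0` around the empirical measure is at least
`(1/N) ∑ᵢ sup_{a ∈ A} ℓ((vᵢ)̈_a, yᵢ, θ)`.  (`sup S ≥ r` is rendered as: every upper
bound of `S` is at least `r`.) -/
theorem dro_ge_counterfactual_risk
    {n N : ℕ} (hN : 0 < N) {Θ : Type*}
    (M : Matrix (Fin n) (Fin n) ℝ) (hM : IsUnit M.det)
    (I : Finset (Fin n))
    (nn : ({i // i ∈ Iᶜ} → ℝ) → ℝ)
    (hnn0 : ∀ x, nn x = 0 ↔ x = 0)
    (hnnadd : ∀ x y, nn (x + y) ≤ nn x + nn y)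
    (hnnsmul : ∀ (c : ℝ) (x), nn (c • x) = |c| * nn x)
    (A : Set ({i // i ∈ I} → ℝ)) (hA : IsCompact A) (hAne : A.Nonempty)
    (ℓ : (Fin n → ℝ) → ℝ → Θ → ℝ) (hℓ : ∀ y θ, Continuous (fun v => ℓ v y θ))
    {p : ℝ} (hp : 1 ≤ p) {δ : ℝ} (hδ : 0 ≤ δ) (θ : Θ)
    (v : Fin N → (Fin n → ℝ)) (y : Fin N → ℝ) :
    ∀ r ∈ upperBounds
        {r : ℝ | ∃ Q : Measure ((Fin n → ℝ) × ℝ), IsProbabilityMeasure Q ∧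
          transportCost
            (fun z z' => if z.2 = z'.2 then
                ENNReal.ofReal (nn (fun j => M⁻¹.mulVec z.1 j - M⁻¹.mulVec z'.1 j))
              else ⊤) p Q
            ((N : ℝ≥0∞)⁻¹ • ∑ i, Measure.dirac (v i, y i)) ≤ ENNReal.ofReal δ ∧
          r = ∫ z, ℓ z.1 z.2 θ ∂Q},
      (N : ℝ)⁻¹ * ∑ i, (⨆ a : A, ℓ (twin M I (v i) a) (y i) θ) ≤ r := by
  intro r hr
  have hmax : ∀ i, ∃ a ∈ A, (⨆ a : A, ℓ (twin M I (v i) a) (y i) θ)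
      = ℓ (twin M I (v i) a) (y i) θ := by
    intro i
    obtain ⟨a, ha, hsup, -⟩ := hA.exists_sSup_image_eq_and_ge hAne
      (((hℓ (y i) θ).comp (continuous_twin M I (v i))).continuousOn)
    exact ⟨a, ha, by rw [sSup_image'] at hsup; exact hsup⟩
  choose a _ ha using hmax
  refine hr ⟨empirical fun i => (twin M I (v i) (a i), y i),
    isProbabilityMeasure_empirical hN _, ?_, ?_⟩
  · refine (transportCost_empirical_eq_zero hN _ (by linarith) _ (fun i => (v i, y i)) ?_).le.trans
      bot_le
    intro i
    have h0 : nn (fun _ => 0) = 0 := (hnn0 _).2 rfl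
    simp [inv_mulVec_twin hM, h0]
  · rw [integral_empirical]
    simp only [ha]
end

section
/- Let h : ℝ → ℝ be Lipschitz with constant L ≥ 0 and suppose there exists a sequence (t_k) with t_k → ∞ such that for every t₀ ∈ ℝ, |h(t₀ + t_k) − h(t₀)| / |t_k| → L. Let ‖·‖ be a norm on ℝ^m with dual norm ‖w‖_* = sup{⟨w, x⟩ : ‖x‖ ≤ 1}, and let θ ∈ ℝ^m with θ ≠ 0 and b ∈ ℝ. Then for every x₀ ∈ ℝ^m there exists a sequence (Δ_k) in ℝ^m with ‖Δ_k‖ → ∞ such that |h(b + ⟨θ, x₀ + Δ_k⟩) − h(b + ⟨θ, x₀⟩)| / ‖Δ_k‖ → L ‖θ‖_*. -/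
open Filter

/-!
The dual norm is a supremum of a linear form over the unit ball of `nn`. All norms on `ℝ^m` are
equivalent, so that ball is compact and the supremum is attained at some `v`; since `θ ≠ 0`, its
value `D = ‖θ‖_*` is positive, and by homogeneity `nn v = 1`. The perturbations
`Δ_k = (t_k / D) v` then satisfy `⟨θ, Δ_k⟩ = t_k` and `nn (Δ_k) = |t_k| / D`: the composite loss
moves along them exactly as `h` moves along `t_k`, and the growth rate is multiplied by `D`.
-/

/-- A function on `ℝ^m` satisfying the norm axioms is convex, hence continuous. -/
lemma continuous_of_norm_axioms {m : ℕ} (nn : (Fin m → ℝ) → ℝ)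
    (hnnadd : ∀ x y, nn (x + y) ≤ nn x + nn y)
    (hnnsmul : ∀ (c : ℝ) (x), nn (c • x) = |c| * nn x) : Continuous nn := by
  have hconv : ConvexOn ℝ Set.univ nn := by
    refine ⟨convex_univ, fun x _ y _ a b ha hb _ => ?_⟩
    have := hnnadd (a • x) (b • y)
    rwa [hnnsmul, hnnsmul, abs_of_nonneg ha, abs_of_nonneg hb] at this
  exact continuousOn_univ.1 (hconv.continuousOn isOpen_univ)

lemma nonneg_of_norm_axioms {m : ℕ} (nn : (Fin m → ℝ) → ℝ)
    (hnn0 : ∀ x, nn x = 0 ↔ x = 0)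
    (hnnadd : ∀ x y, nn (x + y) ≤ nn x + nn y)
    (hnnsmul : ∀ (c : ℝ) (x), nn (c • x) = |c| * nn x) (x : Fin m → ℝ) : 0 ≤ nn x := by
  have h1 := hnnadd x ((-1 : ℝ) • x)
  rw [hnnsmul] at h1
  have h2 : x + (-1 : ℝ) • x = 0 := by simp
  rw [h2, (hnn0 0).2 rfl] at h1
  norm_num at h1
  linarith

/-- The unit ball is closed by continuity of `nn`, and bounded because `nn` has a positive minimum
on the unit sphere of the sup norm. -/
lemma isCompact_unit_ball {m : ℕ} (nn : (Fin m → ℝ) → ℝ)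
    (hnn0 : ∀ x, nn x = 0 ↔ x = 0)
    (hnnadd : ∀ x y, nn (x + y) ≤ nn x + nn y)
    (hnnsmul : ∀ (c : ℝ) (x), nn (c • x) = |c| * nn x) : IsCompact {x | nn x ≤ 1} := by
  have hc := continuous_of_norm_axioms nn hnnadd hnnsmul
  refine Metric.isCompact_of_isClosed_isBounded (isClosed_le hc continuous_const) ?_
  have hscale : ∀ x : Fin m → ℝ, x ≠ 0 → ‖x‖⁻¹ • x ∈ Metric.sphere (0 : Fin m → ℝ) 1 := by
    intro x hx
    rw [mem_sphere_zero_iff_norm, norm_smul, norm_inv, norm_norm,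
      inv_mul_cancel₀ (norm_ne_zero_iff.2 hx)]
  rcases (Metric.sphere (0 : Fin m → ℝ) 1).eq_empty_or_nonempty with he | hne
  · refine Bornology.IsBounded.subset (Bornology.isBounded_singleton (x := 0)) fun x _ => ?_
    by_contra hx
    have := hscale x hx
    simp [he] at this
  · obtain ⟨z, hz, hmin⟩ := (isCompact_sphere (0 : Fin m → ℝ) 1).exists_isMinOn hne hc.continuousOn
    have hzpos : 0 < nn z := by
      refine lt_of_le_of_ne (nonneg_of_norm_axioms nn hnn0 hnnadd hnnsmul z) fun h0 => ?_
      rw [(hnn0 z).1 h0.symm] at hz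
      simp at hz
    refine isBounded_iff_forall_norm_le.2 ⟨(nn z)⁻¹, fun x hx => ?_⟩
    rcases eq_or_ne x 0 with rfl | hx0
    · simpa using hzpos.le
    · have h1 : nn z ≤ nn (‖x‖⁻¹ • x) := hmin (hscale x hx0)
      have hxp := norm_pos_iff.2 hx0
      rw [hnnsmul, abs_of_pos (inv_pos.2 hxp), inv_mul_eq_div, le_div_iff₀ hxp] at h1
      rw [← one_div, le_div_iff₀ hzpos, mul_comm]
      exact h1.trans hx

/-- Equality case of the Hölder inequality `⟨θ, x⟩ ≤ ‖θ‖_* ‖x‖`: for `θ ≠ 0` it holds at some unit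
vector, and the dual norm is positive. -/
lemma exists_dual_norm_attained {m : ℕ} (nn : (Fin m → ℝ) → ℝ)
    (hnn0 : ∀ x, nn x = 0 ↔ x = 0)
    (hnnadd : ∀ x y, nn (x + y) ≤ nn x + nn y)
    (hnnsmul : ∀ (c : ℝ) (x), nn (c • x) = |c| * nn x)
    (θ : Fin m → ℝ) (hθ : θ ≠ 0) :
    ∃ v, nn v = 1 ∧ 0 < ∑ j, θ j * v j ∧
      sSup {r : ℝ | ∃ x, nn x ≤ 1 ∧ r = ∑ j, θ j * x j} = ∑ j, θ j * v j := by
  have hnonneg := nonneg_of_norm_axioms nn hnn0 hnnadd hnnsmul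
  have hpos : ∀ x, x ≠ 0 → 0 < nn x := fun x hx =>
    lt_of_le_of_ne (hnonneg x) fun h0 => hx ((hnn0 x).1 h0.symm)
  have hlin : ∀ (c : ℝ) (x : Fin m → ℝ), ∑ j, θ j * (c • x) j = c * ∑ j, θ j * x j := by
    intro c x
    rw [Finset.mul_sum]
    exact Finset.sum_congr rfl fun j _ => by simp only [Pi.smul_apply, smul_eq_mul]; ring
  have hunit : ∀ x, x ≠ 0 → nn ((nn x)⁻¹ • x) = 1 := fun x hx => by
    rw [hnnsmul, abs_of_pos (inv_pos.2 (hpos x hx)), inv_mul_cancel₀ (hpos x hx).ne']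
  obtain ⟨v, hv, hmax⟩ := (isCompact_unit_ball nn hnn0 hnnadd hnnsmul).exists_isMaxOn
    ⟨0, by simp [(hnn0 0).2 rfl]⟩
    (f := fun x => ∑ j, θ j * x j) (by fun_prop)
  have hmax' : ∀ x, nn x ≤ 1 → ∑ j, θ j * x j ≤ ∑ j, θ j * v j := fun x hx => hmax hx
  have hD : 0 < ∑ j, θ j * v j := by
    refine lt_of_lt_of_le ?_ (hmax' _ (hunit θ hθ).le)
    rw [hlin]
    refine mul_pos (inv_pos.2 (hpos θ hθ)) ?_
    obtain ⟨i, hi⟩ := Function.ne_iff.1 hθ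
    exact Finset.sum_pos' (fun j _ => mul_self_nonneg _) ⟨i, Finset.mem_univ _, mul_self_pos.2 hi⟩
  have hv0 : v ≠ 0 := by
    rintro rfl
    simp at hD
  refine ⟨v, le_antisymm hv ?_, hD, ?_⟩
  · -- Otherwise normalizing `v` would strictly increase the linear form.
    have h1 := hmax' _ (hunit v hv0).le
    rw [hlin, inv_mul_eq_div, div_le_iff₀ (hpos v hv0)] at h1
    exact le_of_mul_le_mul_left (by linarith) hD
  · refine IsGreatest.csSup_eq ⟨⟨v, hv, rfl⟩, ?_⟩
    rintro r ⟨x, hx, rfl⟩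
    exact hmax' x hx

/-- Tightness at infinity of the composite loss: if `h` is `L`-Lipschitz and attains
its Lipschitz constant asymptotically along a sequence `t_k → ∞`, and `θ ≠ 0`, then for
every base point `x₀` there is a sequence of perturbations `Δ_k` with `‖Δ_k‖ → ∞` along
which the growth rate of `x ↦ h(b + ⟨θ, x⟩)` equals `L ‖θ‖_*`, where `‖·‖` is a norm
`nn` on `ℝ^m` and `‖·‖_*` its dual norm. -/
theorem composite_tightness_at_infinity
    {m : ℕ} (h : ℝ → ℝ) {L : ℝ} (hL : 0 ≤ L)
    (hlip : ∀ t₁ t₂ : ℝ, |h t₂ - h t₁| ≤ L * |t₂ - t₁|)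
    (t : ℕ → ℝ) (ht : Tendsto t atTop atTop)
    (htight : ∀ t₀ : ℝ,
      Tendsto (fun k => |h (t₀ + t k) - h t₀| / |t k|) atTop (nhds L))
    (nn : (Fin m → ℝ) → ℝ)
    (hnn0 : ∀ x, nn x = 0 ↔ x = 0)
    (hnnadd : ∀ x y, nn (x + y) ≤ nn x + nn y)
    (hnnsmul : ∀ (c : ℝ) (x), nn (c • x) = |c| * nn x)
    (nnd : (Fin m → ℝ) → ℝ)
    (hnnd : ∀ w, nnd w = sSup {r : ℝ | ∃ x, nn x ≤ 1 ∧ r = ∑ j, w j * x j})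
    (θ : Fin m → ℝ) (hθ : θ ≠ 0) (b : ℝ) :
    ∀ x₀ : Fin m → ℝ, ∃ Δ : ℕ → (Fin m → ℝ),
      Tendsto (fun k => nn (Δ k)) atTop atTop ∧
      Tendsto (fun k =>
          |h (b + ∑ j, θ j * (x₀ j + Δ k j)) - h (b + ∑ j, θ j * x₀ j)| / nn (Δ k))
        atTop (nhds (L * nnd θ)) := by
  intro x₀
  obtain ⟨v, hv1, hD, hsup⟩ := exists_dual_norm_attained nn hnn0 hnnadd hnnsmul θ hθ
  rw [hnnd, hsup]
  set D := ∑ j, θ j * v j with hDdef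
  have hnorm : ∀ k, nn ((t k / D) • v) = |t k| / D := fun k => by
    rw [hnnsmul, hv1, mul_one, abs_div, abs_of_pos hD]
  have hinner : ∀ k, b + ∑ j, θ j * (x₀ j + ((t k / D) • v) j)
      = (b + ∑ j, θ j * x₀ j) + t k := fun k => by
    have : ∑ j, θ j * ((t k / D) • v) j = t k := by
      calc ∑ j, θ j * ((t k / D) • v) j = (t k / D) * D := by
            rw [hDdef, Finset.mul_sum]
            exact Finset.sum_congr rfl fun j _ => by
              simp only [Pi.smul_apply, smul_eq_mul]; ring
        _ = t k := div_mul_cancel₀ _ hD.ne'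
    simp only [mul_add, Finset.sum_add_distrib, this]
    ring
  refine ⟨fun k => (t k / D) • v, ?_, ?_⟩
  · simp only [hnorm]
    exact (tendsto_abs_atTop_atTop.comp ht).atTop_div_const hD
  · simp only [hnorm, hinner, div_div_eq_mul_div, mul_div_right_comm]
    exact (htight _).mul_const D
end
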